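/- arXiv:2501.13980 — 2 statements merged into one kernel-verified Lean document; each statement's English description precedes it below -/
import Mathlib

section
/- Let n ≥ 8 and let G be a connected locally nonforesty graph of order n whose size is minimum among all connected locally nonforesty graphs of order n. Then every block of G has order at most 6. -/
/-- A graph `G` is locally nonforesty if for every vertex `v`, the subgraph induced by
the neighborhood of `v` contains a cycle (i.e., is not acyclic). -/
def LocallyNonforesty {V : Type*} (G : SimpleGraph V) : Prop :=
  ∀ v : V, ¬ (G.induce (G.neighborSet v)).IsAcyclic

/-- A vertex set `B` induces a block of `G`: the induced subgraph `G[B]` is connected,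
has no cut vertex, and `B` is maximal with these properties.  (A block of a graph is a
maximal connected subgraph without a cut vertex; such a subgraph is always induced.) -/
def IsBlock {V : Type*} (G : SimpleGraph V) (B : Set V) : Prop :=
  (G.induce B).Connected ∧
    (∀ v ∈ B, (G.induce (B \ {v})).Preconnected) ∧
    ∀ C : Set V, B ⊆ C → (G.induce C).Connected →
      (∀ v ∈ C, (G.induce (C \ {v})).Preconnected) → C = B

/-!
Let `μ` denote the cyclomatic number `|E| - |V| + c` and call `4 μ(G[U]) - 3 |U|` the excess of a
set `U` of vertices. A cycle in the neighborhood of a vertex outside `U` allows `U` to be enlarged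
to contain that vertex without lowering the excess, and comparison with a connected graph covered
by few copies of `K₄` bounds the excess of the vertex set of a minimal `G` by `6`. This leaves no
room for a vertex outside all `4`-cliques, and then every edge that is not a bridge lies in a
`4`-clique too, since otherwise it could be deleted.

Now grow a set along `4`-cliques through a block `B` with at least seven vertices. The first clique
has excess `0` and each further one raises it by at least `3`, by at least `5` if it shares several
vertices with the set built so far. If the last one shares only one, that vertex does not separate
`B`, so completing `B` closes an additional cycle. In all cases the excess reaches `7`.
-/

open SimpleGraph

section CyclomaticNumber

variable {V : Type*} {F F' : SimpleGraph V} {D E : Set (Sym2 V)} {v x y : V}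

lemma reachable_of_forall_adj_reachable (h : ∀ ⦃u w⦄, F.Adj u w → F'.Reachable u w)
    (hxy : F.Reachable x y) : F'.Reachable x y := by
  obtain ⟨p⟩ := hxy
  induction p with
  | nil => rfl
  | cons huw _ ih => exact (h huw).trans ih

/-- A set of edges is dispensable if deleting all of it does not change which vertices are
reachable from one another. -/
def IsDispensable (F : SimpleGraph V) (D : Set (Sym2 V)) : Prop :=
  D ⊆ F.edgeSet ∧ ∀ ⦃x y⦄, s(x, y) ∈ D → (F.deleteEdges D).Reachable x y

/-- The cyclomatic number `|E| - |V| + c` of a graph with `c` components, encoded as the largest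
size of a dispensable edge set, so that no components have to be counted. -/
noncomputable def cyclomaticNumber (F : SimpleGraph V) : ℕ :=
  sSup (Set.ncard '' {D | IsDispensable F D})

lemma IsDispensable.reachable_deleteEdges (hD : IsDispensable F D) (hxy : F.Reachable x y) :
    (F.deleteEdges D).Reachable x y := by
  refine reachable_of_forall_adj_reachable (fun u w huw => ?_) hxy
  by_cases huwD : s(u, w) ∈ D
  · exact hD.2 huwD
  · exact (deleteEdges_adj.mpr ⟨huw, huwD⟩).reachable

lemma isDispensable_empty (F : SimpleGraph V) : IsDispensable F ∅ :=
  ⟨Set.empty_subset _, fun _ _ h => h.elim⟩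

lemma IsDispensable.union (hF : F ≤ F') (hD : IsDispensable F D) (hE : IsDispensable F' E)
    (hEF : Disjoint E F.edgeSet) : IsDispensable F' (D ∪ E) := by
  have hle : F.deleteEdges D ≤ F'.deleteEdges (D ∪ E) := fun u w huw => by
    obtain ⟨huwF, huwD⟩ := deleteEdges_adj.mp huw
    exact deleteEdges_adj.mpr
      ⟨hF huwF, fun h => h.elim huwD fun huwE => hEF.le_bot ⟨huwE, huwF⟩⟩
  refine ⟨Set.union_subset (hD.1.trans (edgeSet_mono hF)) hE.1, fun x y hxy => ?_⟩
  obtain hxyD | hxyE := hxy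
  · exact (hD.2 hxyD).mono hle
  · refine reachable_of_forall_adj_reachable (fun u w huw => ?_) (hE.2 hxyE)
    obtain ⟨huwF', huwE⟩ := deleteEdges_adj.mp huw
    by_cases huwD : s(u, w) ∈ D
    · exact (hD.2 huwD).mono hle
    · exact (deleteEdges_adj.mpr ⟨huwF', fun h => h.elim huwD huwE⟩).reachable

variable [Finite V]

lemma bddAbove_ncard_isDispensable (F : SimpleGraph V) :
    BddAbove (Set.ncard '' {D | IsDispensable F D}) :=
  ⟨F.edgeSet.ncard, Set.forall_mem_image.mpr fun _ hD => Set.ncard_le_ncard hD.1⟩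

lemma exists_isDispensable_ncard_eq_cyclomaticNumber (F : SimpleGraph V) :
    ∃ D, IsDispensable F D ∧ D.ncard = cyclomaticNumber F :=
  Nat.sSup_mem (Set.Nonempty.image _ ⟨∅, isDispensable_empty F⟩)
    (bddAbove_ncard_isDispensable F)

lemma IsDispensable.ncard_le_cyclomaticNumber (hD : IsDispensable F D) :
    D.ncard ≤ cyclomaticNumber F :=
  le_csSup (bddAbove_ncard_isDispensable F) (Set.mem_image_of_mem _ hD)

lemma cyclomaticNumber_add_ncard_le (hF : F ≤ F') (hE : IsDispensable F' E)
    (hEF : Disjoint E F.edgeSet) : cyclomaticNumber F + E.ncard ≤ cyclomaticNumber F' := by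
  obtain ⟨D, hD, hDcard⟩ := exists_isDispensable_ncard_eq_cyclomaticNumber F
  rw [← hDcard, ← Set.ncard_union_eq (hEF.symm.mono_left hD.1)]
  exact (hD.union hF hE hEF).ncard_le_cyclomaticNumber

lemma cyclomaticNumber_mono (hF : F ≤ F') : cyclomaticNumber F ≤ cyclomaticNumber F' := by
  simpa using cyclomaticNumber_add_ncard_le hF (isDispensable_empty F') (Set.empty_disjoint _)

lemma cyclomaticNumber_lt_of_not_isBridge (hF : F ≤ F') (hxy : F'.Adj x y) (hxyF : ¬ F.Adj x y)
    (hbridge : ¬ F'.IsBridge s(x, y)) : cyclomaticNumber F < cyclomaticNumber F' := by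
  rw [isBridge_iff, not_not] at hbridge
  have hE : IsDispensable F' {s(x, y)} := by
    refine ⟨by simpa using hxy, fun u w huw => ?_⟩
    obtain ⟨rfl, rfl⟩ | ⟨rfl, rfl⟩ := Sym2.eq_iff.mp (Set.mem_singleton_iff.mp huw)
    exacts [hbridge, hbridge.symm]
  simpa using cyclomaticNumber_add_ncard_le hF hE (by simpa using hxyF)

lemma cyclomaticNumber_lt_of_reachable (hF : F ≤ F') (hxy : F'.Adj x y) (hxyF : ¬ F.Adj x y)
    (hreach : F.Reachable x y) : cyclomaticNumber F < cyclomaticNumber F' := by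
  refine cyclomaticNumber_lt_of_not_isBridge hF hxy hxyF ?_
  rw [isBridge_iff, not_not]
  refine hreach.mono fun u w huw => deleteEdges_adj.mpr ⟨hF huw, fun h => hxyF ?_⟩
  rw [← mem_edgeSet, ← Set.mem_singleton_iff.mp h]
  exact huw

lemma cyclomaticNumber_add_ncard_le_of_star {N : Set V} (hv : v ∉ F.support)
    (hN : ∀ x ∈ N, ∀ y ∈ N, F.Reachable x y) (hF : F ≤ F') (hvN : N ⊆ F'.neighborSet v) :
    cyclomaticNumber F + N.ncard ≤ cyclomaticNumber F' + 1 := by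
  obtain rfl | ⟨b, hb⟩ := N.eq_empty_or_nonempty
  · have := cyclomaticNumber_mono hF
    simp only [Set.ncard_empty]
    lia
  set E : Set (Sym2 V) := (fun w => s(v, w)) '' (N \ {b}) with hE_def
  have hEF : Disjoint E F.edgeSet := by
    rw [Set.disjoint_left, Set.forall_mem_image]
    exact fun w _ hw => hv ⟨w, hw⟩
  have hvb : (F'.deleteEdges E).Adj v b := by
    refine deleteEdges_adj.mpr ⟨hvN hb, ?_⟩
    rintro ⟨w, hw, hwb⟩
    exact hw.2 (Sym2.congr_right.mp hwb)
  have hle : F ≤ F'.deleteEdges E := fun u w huw =>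
    deleteEdges_adj.mpr ⟨hF huw, fun h => hEF.le_bot ⟨h, huw⟩⟩
  have hvw : ∀ w ∈ N, (F'.deleteEdges E).Reachable v w := fun w hw =>
    hvb.reachable.trans ((hN b hb w hw).mono hle)
  have hE : IsDispensable F' E := by
    refine ⟨Set.image_subset_iff.mpr fun w hw => hvN hw.1, ?_⟩
    rintro x y ⟨w, hw, hwxy⟩
    obtain ⟨rfl, rfl⟩ | ⟨rfl, rfl⟩ := Sym2.eq_iff.mp hwxy
    exacts [hvw w hw.1, (hvw w hw.1).symm]
  have hcard : E.ncard + 1 = N.ncard := by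
    rw [hE_def, Set.ncard_image_of_injective _ fun _ _ h => Sym2.congr_right.mp h,
      Set.ncard_sdiff_singleton_add_one hb]
  have := cyclomaticNumber_add_ncard_le hF hE hEF
  lia

lemma card_add_cyclomaticNumber_le_ncard_edgeSet_add_one {G : SimpleGraph V} (hG : G.Connected) :
    Nat.card V + cyclomaticNumber G ≤ G.edgeSet.ncard + 1 := by
  obtain ⟨D, hD, hDcard⟩ := exists_isDispensable_ncard_eq_cyclomaticNumber G
  have hconn : (G.deleteEdges D).Connected :=
    { preconnected := fun x y => hD.reachable_deleteEdges (hG.preconnected x y)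
      nonempty := hG.nonempty }
  have htree := hconn.card_vert_le_card_edgeSet_add_one
  have hcard := Set.ncard_sdiff_add_ncard_of_subset hD.1
  rw [edgeSet_deleteEdges, Nat.card_coe_set_eq] at htree
  lia

end CyclomaticNumber

section SpanningInduce

variable {V : Type*} {G : SimpleGraph V} {U W : Set V} {x y : V}

/-- The subgraph induced by `U`, kept on the whole vertex set so that the subgraphs induced by
different sets can be compared. -/
def spanningInduce (G : SimpleGraph V) (U : Set V) : SimpleGraph V :=
  (G.induce U).spanningCoe

lemma spanningInduce_adj : (spanningInduce G U).Adj x y ↔ G.Adj x y ∧ x ∈ U ∧ y ∈ U := by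
  constructor
  · rintro ⟨_, x, y, hxy, rfl, rfl⟩
    exact ⟨hxy, x.2, y.2⟩
  · rintro ⟨hxy, hx, hy⟩
    exact ⟨hxy.ne, ⟨x, hx⟩, ⟨y, hy⟩, hxy, rfl, rfl⟩

lemma spanningInduce_univ (G : SimpleGraph V) : spanningInduce G Set.univ = G :=
  spanningCoe_induce_univ G

lemma spanningInduce_mono (hUW : U ⊆ W) : spanningInduce G U ≤ spanningInduce G W := by
  intro x y hxy
  rw [spanningInduce_adj] at hxy ⊢
  exact ⟨hxy.1, hUW hxy.2.1, hUW hxy.2.2⟩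

lemma spanningInduce_sup_le_union :
    spanningInduce G U ⊔ spanningInduce G W ≤ spanningInduce G (U ∪ W) :=
  sup_le (spanningInduce_mono Set.subset_union_left) (spanningInduce_mono Set.subset_union_right)

lemma support_spanningInduce_subset : (spanningInduce G U).support ⊆ U := by
  rintro x ⟨y, hxy⟩
  exact (spanningInduce_adj.mp hxy).2.1

lemma isEdgeReachable_spanningInduce {k : ℕ} (hU : (G.induce U).IsEdgeConnected k)
    (hx : x ∈ U) (hy : y ∈ U) : (spanningInduce G U).IsEdgeReachable k x y := by
  intro D hD
  have hcard : (Sym2.map (Subtype.val : U → V) ⁻¹' D).encard < k :=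
    (Set.encard_le_encard_of_injOn (Set.mapsTo_preimage _ D)
      (Sym2.map.injective Subtype.val_injective).injOn).trans_lt hD
  exact (hU ⟨x, hx⟩ ⟨y, hy⟩ hcard).map ⟨Subtype.val, fun {u w} huw => deleteEdges_adj.mpr
    ⟨spanningInduce_adj.mpr ⟨(deleteEdges_adj.mp huw).1, u.2, w.2⟩, (deleteEdges_adj.mp huw).2⟩⟩

lemma preconnected_induce_of_isClique (hU : G.IsClique U) : (G.induce U).Preconnected := by
  rw [induce_eq_top.mpr hU]
  exact preconnected_top

lemma reachable_spanningInduce (hU : (G.induce U).Preconnected) (hx : x ∈ U) (hy : y ∈ U) :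
    (spanningInduce G U).Reachable x y :=
  isEdgeReachable_one.mp (isEdgeReachable_spanningInduce (isEdgeConnected_one.mpr hU) hx hy)

lemma exists_adj_of_preconnected_induce (hU : (G.induce U).Preconnected) (hx : x ∈ U) (hxW : x ∈ W)
    (hy : y ∈ U) (hyW : y ∉ W) : ∃ p ∈ U, ∃ q ∈ U, p ∈ W ∧ q ∉ W ∧ G.Adj p q := by
  obtain ⟨w⟩ := hU ⟨x, hx⟩ ⟨y, hy⟩
  obtain ⟨⟨⟨p, q⟩, hpq⟩, -, hp, hq⟩ := w.exists_boundary_dart (Subtype.val ⁻¹' W) hxW hyW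
  exact ⟨p, p.2, q, q.2, hp, hq, hpq⟩

end SpanningInduce

section EdgeConnectivity

variable {V : Type*} {G : SimpleGraph V} {N : Set V}

lemma eq_top_of_isEdgeConnected [Finite V] {k : ℕ} (hG : G.IsEdgeConnected k)
    (hV : Nat.card V ≤ k + 1) : G = ⊤ := by
  classical
  have := Fintype.ofFinite V
  refine eq_top_iff_forall_isUniversal.mpr fun v => ?_
  cases subsingleton_or_nontrivial V
  · exact .of_subsingleton
  · by_contra hv
    have hlt := (G.degree_lt_card_sub_one v).mpr hv
    have hdeg : k ≤ G.degree v := hG.le_degree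
    rw [Nat.card_eq_fintype_card] at hV
    lia

lemma isEdgeConnected_two_induce_of_isClique (hN : G.IsClique N) (h3 : 3 ≤ N.ncard) :
    (G.induce N).IsEdgeConnected 2 := by
  rw [isEdgeConnected_two]
  intro e x y
  by_cases hxy : x = y
  · exact hxy ▸ .rfl
  have hadj : ∀ ⦃u w : N⦄, u ≠ w → s(u, w) ≠ e → ((G.induce N).deleteEdges {e}).Adj u w :=
    fun u w huw he => deleteEdges_adj.mpr ⟨hN u.2 w.2 (Subtype.coe_ne_coe.mpr huw), he⟩
  by_cases he : s(x, y) = e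
  · obtain ⟨z, hz, hzxy⟩ := Set.exists_mem_notMem_of_ncard_lt_ncard
      (s := {x.1, y.1}) (t := N) ((Set.ncard_insert_le _ _).trans_lt (by rwa [Set.ncard_singleton]))
    have hxz : x ≠ ⟨z, hz⟩ := by rintro rfl; simp at hzxy
    have hzy : ⟨z, hz⟩ ≠ y := by rintro rfl; simp at hzxy
    exact (hadj hxz fun h => hzy (Sym2.congr_right.mp (h.trans he.symm))).reachable.trans
      (hadj hzy fun h => hxz (Sym2.congr_left.mp (h.trans he.symm)).symm).reachable
  · exact (hadj hxy he).reachable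

lemma isEdgeConnected_two_induce_support {u : V} {w : G.Walk u u} (hw : w.IsTrail) :
    (G.induce {x | x ∈ w.support}).IsEdgeConnected 2 := by
  set r := w.induce {x | x ∈ w.support} fun _ hx => hx
  have hr : r.IsTrail := by
    apply Walk.IsTrail.of_map (f := (Embedding.induce _).toHom)
    rwa [Walk.map_induce]
  have hmem : ∀ x : {x | x ∈ w.support}, x ∈ r.support := fun x => by
    rw [Walk.support_induce, List.mem_attachWith]
    exact x.2
  exact fun x y => hr.isEdgeReachable_two (hmem x) (hmem y)

lemma three_le_ncard_support_of_isCycle {u : V} {w : G.Walk u u} (hw : w.IsCycle) :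
    3 ≤ {x | x ∈ w.support}.ncard := by
  classical
  calc 3 ≤ w.length := hw.three_le_length
    _ = w.support.tail.toFinset.card := by
      rw [List.toFinset_card_of_nodup hw.support_nodup, List.length_tail, w.length_support,
        Nat.add_sub_cancel]
    _ ≤ w.support.toFinset.card := Finset.card_le_card fun x hx =>
      List.mem_toFinset.mpr (List.mem_of_mem_tail (List.mem_toFinset.mp hx))
    _ = {x | x ∈ w.support}.ncard := by
      rw [← Set.ncard_coe_finset, List.coe_toFinset]

end EdgeConnectivity

section Rim

variable {V : Type*} {G F : SimpleGraph V} {v y z : V} {N U : Set V}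

/-- A rim at `v` is a set `N` of at least three neighbors of `v` inducing a `2`-edge-connected
graph. Rims play the role of the cycles in the local subgraph at `v`: only the
`2`-edge-connectedness of a cycle is needed to count edges. -/
structure IsRim (G : SimpleGraph V) (v : V) (N : Set V) : Prop where
  subset_neighborSet : N ⊆ G.neighborSet v
  isEdgeConnected_two : (G.induce N).IsEdgeConnected 2
  three_le_ncard : 3 ≤ N.ncard

lemma LocallyNonforesty.exists_isRim (hG : LocallyNonforesty G) (v : V) : ∃ N, IsRim G v N := by
  obtain ⟨u, c, hc⟩ : ∃ u, ∃ c : (G.induce (G.neighborSet v)).Walk u u, c.IsCycle := by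
    simpa [IsAcyclic] using hG v
  let f := (Embedding.induce (G := G) (G.neighborSet v)).toHom
  have hcycle : (c.map f).IsCycle := hc.map Subtype.val_injective
  refine ⟨{x | x ∈ (c.map f).support}, fun x hx => ?_,
    isEdgeConnected_two_induce_support hcycle.isTrail, three_le_ncard_support_of_isCycle hcycle⟩
  obtain ⟨x, -, rfl⟩ := List.mem_map.mp ((c.support_map f) ▸ hx)
  exact x.2

lemma isRim_sdiff_singleton (hU : G.IsClique U) (h4 : 4 ≤ U.ncard) (hv : v ∈ U) :
    IsRim G v (U \ {v}) := by
  have h3 : 3 ≤ (U \ {v}).ncard := by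
    rw [Set.ncard_sdiff_singleton_of_mem hv]
    lia
  exact ⟨fun x hx => hU hv hx.1 fun h => hx.2 h.symm,
    isEdgeConnected_two_induce_of_isClique (hU.subset Set.sdiff_subset) h3, h3⟩

lemma IsRim.notMem (hN : IsRim G v N) : v ∉ N :=
  fun hv => G.loopless.irrefl v (hN.subset_neighborSet hv)

lemma LocallyNonforesty.four_le_card [Finite V] [Nonempty V] (hG : LocallyNonforesty G) :
    4 ≤ Nat.card V := by
  obtain ⟨v⟩ := ‹Nonempty V›
  obtain ⟨N, hN⟩ := hG.exists_isRim v
  have h4 := Set.ncard_le_card (insert v N)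
  rw [Set.ncard_insert_of_notMem hN.notMem] at h4
  linarith [hN.three_le_ncard]

lemma isClique_compl_of_forall_isRim (hG : ∀ v, ∃ N, IsRim G v N)
    (hU : ∀ v ∉ U, ∀ N, IsRim G v N → U ∪ insert v N = Set.univ) : G.IsClique Uᶜ := by
  intro v hv w hw hvw
  obtain ⟨N, hN⟩ := hG v
  have hw' : w ∈ U ∪ insert v N := hU v hv N hN ▸ Set.mem_univ w
  exact hN.subset_neighborSet ((hw'.resolve_left hw).resolve_left hvw.symm)

lemma IsRim.isClique_insert [Finite V] (hN : IsRim G v N) (h3 : N.ncard = 3) :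
    G.IsClique (insert v N) := by
  have htop : G.induce N = ⊤ :=
    eq_top_of_isEdgeConnected hN.isEdgeConnected_two (by rw [Nat.card_coe_set_eq, h3])
  exact (induce_eq_top.mp htop).insert fun x hx _ => hN.subset_neighborSet hx

lemma IsRim.reachable_sup (hN : IsRim G v N) (hy : y ∈ N) (hz : z ∈ N) :
    (F ⊔ spanningInduce G N).Reachable y z :=
  (reachable_spanningInduce (hN.isEdgeConnected_two.preconnected two_ne_zero) hy hz).mono
    le_sup_right

lemma IsRim.cyclomaticNumber_sup_add_ncard_le [Finite V] (hN : IsRim G v N)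
    (hv : v ∉ F.support) :
    cyclomaticNumber (F ⊔ spanningInduce G N) + N.ncard ≤
      cyclomaticNumber (F ⊔ spanningInduce G (insert v N)) + 1 := by
  refine cyclomaticNumber_add_ncard_le_of_star (v := v) ?_
    (fun y hy z hz => hN.reachable_sup hy hz)
    (sup_le_sup_left (spanningInduce_mono (Set.subset_insert v N)) F) fun y hy => ?_
  · rintro ⟨y, hvy | hvy⟩
    · exact hv ⟨y, hvy⟩
    · exact hN.notMem (spanningInduce_adj.mp hvy).2.1
  · exact Or.inr (spanningInduce_adj.mpr
      ⟨hN.subset_neighborSet hy, Set.mem_insert v N, Set.mem_insert_of_mem v hy⟩)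

lemma IsRim.cyclomaticNumber_add_ncard_le [Finite V] (hN : IsRim G v N) (hv : v ∉ F.support) :
    cyclomaticNumber F + N.ncard ≤
      cyclomaticNumber (F ⊔ spanningInduce G (insert v N)) + 1 := by
  have hmono : cyclomaticNumber F ≤ cyclomaticNumber (F ⊔ spanningInduce G N) :=
    cyclomaticNumber_mono le_sup_left
  have hstar := hN.cyclomaticNumber_sup_add_ncard_le hv
  lia

lemma IsRim.cyclomaticNumber_lt_sup [Finite V] (hN : IsRim G v N) (hNF : ¬ N ⊆ F.support) :
    cyclomaticNumber F < cyclomaticNumber (F ⊔ spanningInduce G N) := by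
  obtain ⟨y, hy, hyF⟩ := Set.not_subset.mp hNF
  have : Nontrivial N := Set.nontrivial_coe_sort.mpr
    (Set.one_lt_ncard_iff_nontrivial.mp (by linarith [hN.three_le_ncard]))
  obtain ⟨⟨z, hz⟩, hyz⟩ :=
    (hN.isEdgeConnected_two.preconnected two_ne_zero).exists_adj_of_nontrivial ⟨y, hy⟩
  have hyz' : (F ⊔ spanningInduce G N).Adj y z := Or.inr (spanningInduce_adj.mpr ⟨hyz, hy, hz⟩)
  refine cyclomaticNumber_lt_of_not_isBridge le_sup_left hyz' (fun h => hyF ⟨z, h⟩) ?_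
  rw [isBridge_iff_not_isEdgeReachable_two hyz', not_not]
  exact (isEdgeReachable_spanningInduce hN.isEdgeConnected_two hy hz).mono le_sup_right

lemma IsRim.cyclomaticNumber_add_ncard_le_of_not_subset [Finite V] (hN : IsRim G v N)
    (hv : v ∉ F.support) (hNF : ¬ N ⊆ F.support) :
    cyclomaticNumber F + N.ncard ≤ cyclomaticNumber (F ⊔ spanningInduce G (insert v N)) := by
  have hlt := hN.cyclomaticNumber_lt_sup hNF
  have hstar := hN.cyclomaticNumber_sup_add_ncard_le hv
  lia

end Rim

section Covering

variable {V : Type*} {G : SimpleGraph V} {v : V} {N U T : Set V}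

lemma induction_on_extension {P : Set V → Prop} (hT : T.Finite) (hU : P U) (hUT : U ⊆ T)
    (hstep : ∀ W ⊆ T, P W → ∀ v ∈ T \ W, ∃ W' ⊆ T, P W' ∧ W ⊆ W' ∧ v ∈ W') : P T := by
  have hfin : {W | P W ∧ W ⊆ T}.Finite := hT.finite_subsets.subset fun W hW => hW.2
  obtain ⟨W, -, hW⟩ := hfin.exists_le_maximal ⟨hU, hUT⟩
  suffices hTW : T ⊆ W by
    rw [hTW.antisymm hW.prop.2]
    exact hW.prop.1
  intro v hv
  by_contra hvW
  obtain ⟨W', hW'T, hPW', hWW', hvW'⟩ := hstep W hW.prop.2 hW.prop.1 v ⟨hv, hvW⟩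
  exact hvW (hW.le_of_ge ⟨hPW', hW'T⟩ hWW' hvW')

variable [Finite V]

lemma IsRim.ncard_union_insert (hN : IsRim G v N) (hv : v ∉ U) :
    (U ∪ insert v N).ncard = U.ncard + 1 + (N \ U).ncard := by
  rw [Set.union_comm, ← Set.ncard_sdiff_add_ncard, Set.insert_sdiff_of_notMem N hv,
    Set.ncard_insert_of_notMem fun h => hN.notMem h.1]
  lia

lemma IsRim.cyclomaticNumber_spanningInduce_add_ncard_le (hN : IsRim G v N) (hv : v ∉ U) :
    cyclomaticNumber (spanningInduce G U) + N.ncard ≤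
      cyclomaticNumber (spanningInduce G (U ∪ insert v N)) + 1 := by
  have hgain := hN.cyclomaticNumber_add_ncard_le (F := spanningInduce G U)
    fun h => hv (support_spanningInduce_subset h)
  have hmono := cyclomaticNumber_mono (spanningInduce_sup_le_union (G := G) (U := U)
    (W := insert v N))
  lia

lemma IsRim.cyclomaticNumber_spanningInduce_add_ncard_le_of_not_subset (hN : IsRim G v N)
    (hv : v ∉ U) (hNU : ¬ N ⊆ U) :
    cyclomaticNumber (spanningInduce G U) + N.ncard ≤
      cyclomaticNumber (spanningInduce G (U ∪ insert v N)) :=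
  (hN.cyclomaticNumber_add_ncard_le_of_not_subset (F := spanningInduce G U)
    (fun h => hv (support_spanningInduce_subset h))
    fun h => hNU (h.trans support_spanningInduce_subset)).trans
  (cyclomaticNumber_mono spanningInduce_sup_le_union)

lemma IsRim.three_mul_ncard_union_insert_add_le (hN : IsRim G v N) (hv : v ∉ U) {c : ℕ}
    (hU : 3 * U.ncard + c ≤ 4 * cyclomaticNumber (spanningInduce G U)) :
    3 * (U ∪ insert v N).ncard + c ≤
      4 * cyclomaticNumber (spanningInduce G (U ∪ insert v N)) := by
  have h3 := hN.three_le_ncard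
  rw [hN.ncard_union_insert hv]
  by_cases hNU : N ⊆ U
  · have hgain := hN.cyclomaticNumber_spanningInduce_add_ncard_le hv
    rw [Set.sdiff_eq_empty.mpr hNU, Set.ncard_empty]
    lia
  · have hgain := hN.cyclomaticNumber_spanningInduce_add_ncard_le_of_not_subset hv hNU
    have hle : (N \ U).ncard ≤ N.ncard := Set.ncard_le_ncard Set.sdiff_subset
    lia

lemma three_mul_card_add_le_four_mul_cyclomaticNumber (hG : ∀ v, ∃ N, IsRim G v N) {c : ℕ}
    (hU : 3 * U.ncard + c ≤ 4 * cyclomaticNumber (spanningInduce G U)) :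
    3 * Nat.card V + c ≤ 4 * cyclomaticNumber G := by
  have huniv := induction_on_extension
    (P := fun W => 3 * W.ncard + c ≤ 4 * cyclomaticNumber (spanningInduce G W))
    Set.finite_univ hU (Set.subset_univ U) fun W _ hW v hv =>
      let ⟨N, hN⟩ := hG v
      ⟨_, Set.subset_univ _, hN.three_mul_ncard_union_insert_add_le hv.2 hW, Set.subset_union_left,
        Or.inr (Set.mem_insert v N)⟩
  rwa [Set.ncard_univ, spanningInduce_univ] at huniv

end Covering

section FourCliques

variable {V : Type*} {G : SimpleGraph V} {v y z : V} {U N : Set V} {s : Finset V}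

/-- The vertex `v` lies in a clique of four vertices of `G`. -/
def InFourClique (G : SimpleGraph V) (v : V) : Prop :=
  ∃ s : Finset V, G.IsNClique 4 s ∧ v ∈ s

lemma isRim_of_isNClique_four (hs : G.IsNClique 4 s) (hv : v ∈ s) :
    IsRim G v (↑s \ {v}) :=
  isRim_sdiff_singleton hs.isClique (by rw [Set.ncard_coe_finset, hs.card_eq]) hv

lemma ncard_sdiff_singleton_of_isNClique_four (hs : G.IsNClique 4 s) (hv : v ∈ s) :
    (↑s \ {v} : Set V).ncard = 3 := by
  rw [Set.ncard_sdiff_singleton_of_mem (Finset.mem_coe.mpr hv), Set.ncard_coe_finset, hs.card_eq]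

lemma inFourClique_of_isClique [Finite V] (hU : G.IsClique U) (hv : v ∈ U) (h4 : 4 ≤ U.ncard) :
    InFourClique G v := by
  lift U to Finset V using U.toFinite
  rw [Set.ncard_coe_finset] at h4
  obtain ⟨s, hvs, hsU, hs⟩ := Finset.exists_subsuperset_card_eq
    (Finset.singleton_subset_iff.mpr hv) (by simp) h4
  exact ⟨s, ⟨hU.subset hsU, hs⟩, Finset.singleton_subset_iff.mp hvs⟩

lemma IsRim.inFourClique [Finite V] (hN : IsRim G v N) (h3 : N.ncard = 3) : InFourClique G v :=
  inFourClique_of_isClique (hN.isClique_insert h3) (Set.mem_insert v N)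
    (by rw [Set.ncard_insert_of_notMem hN.notMem, h3])

/-- The least cyclomatic number of a graph on `n ≥ 4` vertices each of which lies in a
`4`-clique: an optimal covering consists of `⌈n / 4⌉` copies of `K₄`, each of which contributes `3`,
except that the last one adds only `2` when `n ≡ 1 [MOD 4]`. -/
def coverNullity (n : ℕ) : ℕ := 2 * ((n + 3) / 4) + (n + 2) / 4

lemma coverNullity_add_four (n : ℕ) : coverNullity (n + 4) = coverNullity n + 3 := by
  unfold coverNullity
  lia

lemma four_mul_coverNullity_le (n : ℕ) : 4 * coverNullity n ≤ 3 * n + 6 := by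
  unfold coverNullity
  lia

variable [Finite V]

lemma cyclomaticNumber_add_min_le_of_isNClique_four (hs : G.IsNClique 4 s) (hsU : ¬ ↑s ⊆ U) :
    cyclomaticNumber (spanningInduce G U) + min 3 ((↑s \ U : Set V).ncard + 1) ≤
      cyclomaticNumber (spanningInduce G U ⊔ spanningInduce G s) := by
  obtain ⟨y, hys, hyU⟩ := Set.not_subset.mp hsU
  have hrim : IsRim G y (↑s \ {y}) := isRim_of_isNClique_four hs hys
  have hyF : y ∉ (spanningInduce G U).support := fun h => hyU (support_spanningInduce_subset h)
  have hinsert : insert y (↑s \ {y}) = (↑s : Set V) := by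
    rw [Set.insert_sdiff_singleton, Set.insert_eq_of_mem hys]
  have hcard := ncard_sdiff_singleton_of_isNClique_four hs hys
  by_cases hsyU : ↑s \ {y} ⊆ U
  · have hgain := hrim.cyclomaticNumber_add_ncard_le hyF
    rw [hinsert, hcard] at hgain
    have hle : (↑s \ U : Set V).ncard ≤ 1 := by
      rw [← Set.ncard_singleton y]
      exact Set.ncard_le_ncard (Set.sdiff_subset_comm.mp hsyU)
    lia
  · have hgain := hrim.cyclomaticNumber_add_ncard_le_of_not_subset hyF
      fun h => hsyU (h.trans support_spanningInduce_subset)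
    rw [hinsert, hcard] at hgain
    lia

lemma ncard_sdiff_mem_Icc_of_isNClique_four (hs : G.IsNClique 4 s) (hsU : ¬ ↑s ⊆ U) :
    (↑s \ U : Set V).ncard ∈ Set.Icc 1 4 := by
  refine ⟨(Set.ncard_pos).mpr (Set.sdiff_nonempty.mpr hsU), ?_⟩
  rw [← hs.card_eq, ← Set.ncard_coe_finset]
  exact Set.ncard_le_ncard Set.sdiff_subset

lemma coverNullity_ncard_union_le (hs : G.IsNClique 4 s) (hsU : ¬ ↑s ⊆ U)
    (hU : coverNullity U.ncard ≤ cyclomaticNumber (spanningInduce G U)) :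
    coverNullity (U ∪ s).ncard ≤ cyclomaticNumber (spanningInduce G (U ∪ s)) := by
  have hgain := (cyclomaticNumber_add_min_le_of_isNClique_four hs hsU).trans
    (cyclomaticNumber_mono spanningInduce_sup_le_union)
  obtain ⟨h1, h4⟩ := ncard_sdiff_mem_Icc_of_isNClique_four hs hsU
  have hcard : (U ∪ s).ncard = (↑s \ U : Set V).ncard + U.ncard := by
    rw [Set.ncard_sdiff_add_ncard, Set.union_comm]
  unfold coverNullity at hU ⊢
  lia

lemma coverNullity_ncard_le_cyclomaticNumber {T : Set V}
    (hT : ∀ v ∈ T, ∃ s : Finset V, G.IsNClique 4 s ∧ v ∈ s ∧ ↑s ⊆ T) :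
    coverNullity T.ncard ≤ cyclomaticNumber (spanningInduce G T) := by
  refine induction_on_extension (U := ∅)
    (P := fun U => coverNullity U.ncard ≤ cyclomaticNumber (spanningInduce G U))
    T.toFinite (by simp [coverNullity]) (Set.empty_subset T) fun U hUT hU v hv => ?_
  obtain ⟨s, hs, hvs, hsT⟩ := hT v hv.1
  exact ⟨U ∪ s, Set.union_subset hUT hsT,
    coverNullity_ncard_union_le hs (fun h => hv.2 (h hvs)) hU, Set.subset_union_left, Or.inr hvs⟩

lemma coverNullity_card_le_cyclomaticNumber (hG : ∀ v, InFourClique G v) :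
    coverNullity (Nat.card V) ≤ cyclomaticNumber G := by
  have huniv := coverNullity_ncard_le_cyclomaticNumber (G := G) (T := Set.univ) fun v _ =>
    let ⟨s, hs, hv⟩ := hG v
    ⟨s, hs, hv, Set.subset_univ _⟩
  rwa [Set.ncard_univ, spanningInduce_univ] at huniv

/-- Deleting a non-bridge that lies in no `4`-clique would leave a graph covered by `4`-cliques
with too small a cyclomatic number. -/
lemma exists_isNClique_four_of_not_isBridge (hG : ∀ v, InFourClique G v)
    (hle : cyclomaticNumber G ≤ coverNullity (Nat.card V)) (hyz : G.Adj y z)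
    (hbridge : ¬ G.IsBridge s(y, z)) : ∃ s : Finset V, G.IsNClique 4 s ∧ y ∈ s ∧ z ∈ s := by
  by_contra! hnone
  have hcover : ∀ v, InFourClique (G.deleteEdges {s(y, z)}) v := fun v => by
    obtain ⟨s, hs, hv⟩ := hG v
    refine ⟨s, ⟨fun a ha b hb hab => deleteEdges_adj.mpr ⟨hs.isClique ha hb hab, fun h => ?_⟩,
      hs.card_eq⟩, hv⟩
    obtain ⟨rfl, rfl⟩ | ⟨rfl, rfl⟩ := Sym2.eq_iff.mp (Set.mem_singleton_iff.mp h)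
    exacts [hnone s hs ha hb, hnone s hs hb ha]
  have hlt := cyclomaticNumber_lt_of_not_isBridge (deleteEdges_le {s(y, z)}) hyz (by simp) hbridge
  have hcard := coverNullity_card_le_cyclomaticNumber hcover
  lia

lemma IsRim.four_le_ncard_compl (hN : IsRim G v N) (h3 : N.ncard ≠ 3) (hv : v ∉ U)
    (hU : 3 * U.ncard ≤ 4 * cyclomaticNumber (spanningInduce G U))
    (huniv : U ∪ insert v N = Set.univ) (hle : 4 * cyclomaticNumber G ≤ 3 * Nat.card V + 6) :
    4 ≤ Uᶜ.ncard := by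
  have hN3 := hN.three_le_ncard
  have hcompl := Set.ncard_add_ncard_compl U
  have hcard := hN.ncard_union_insert hv
  rw [huniv, Set.ncard_univ] at hcard
  by_cases hNU : N ⊆ U
  · have hgain := hN.cyclomaticNumber_spanningInduce_add_ncard_le hv
    rw [huniv, spanningInduce_univ] at hgain
    rw [Set.sdiff_eq_empty.mpr hNU, Set.ncard_empty] at hcard
    lia
  · have hgain := hN.cyclomaticNumber_spanningInduce_add_ncard_le_of_not_subset hv hNU
    rw [huniv, spanningInduce_univ] at hgain
    lia

/-- If some vertex were in no `4`-clique, take a maximal proper set `U` with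
`3 |U| ≤ 4 μ(G[U])` that contains all `4`-cliques. Every rim at a vertex outside `U` completes `U`
to the whole vertex set, so the complement of `U` is a clique, and it has four vertices. -/
lemma LocallyNonforesty.inFourClique (hG : LocallyNonforesty G)
    (hle : 4 * cyclomaticNumber G ≤ 3 * Nat.card V + 6) (v : V) : InFourClique G v := by
  set S := {v | InFourClique G v}
  have hS : 3 * S.ncard ≤ 4 * cyclomaticNumber (spanningInduce G S) := by
    have hcover := coverNullity_ncard_le_cyclomaticNumber (G := G) (T := S)
      fun v ⟨s, hs, hv⟩ => ⟨s, hs, hv, fun w hw => ⟨s, hs, hw⟩⟩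
    unfold coverNullity at hcover
    lia
  by_contra hv
  have hSuniv : S ≠ Set.univ := fun h => hv (h ▸ Set.mem_univ v : v ∈ S)
  obtain ⟨U, hSU, hU⟩ := {U | 3 * U.ncard ≤ 4 * cyclomaticNumber (spanningInduce G U) ∧
    U ≠ Set.univ}.toFinite.exists_le_maximal ⟨hS, hSuniv⟩
  have huniv : ∀ w ∉ U, ∀ N, IsRim G w N → U ∪ insert w N = Set.univ := by
    intro w hw N hN
    by_contra hne
    exact hw (hU.le_of_ge ⟨hN.three_mul_ncard_union_insert_add_le (c := 0) hw hU.prop.1, hne⟩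
      Set.subset_union_left (Or.inr (Set.mem_insert w N)))
  obtain ⟨w, hw⟩ := (Set.ne_univ_iff_exists_notMem U).mp hU.prop.2
  obtain ⟨N, hN⟩ := hG.exists_isRim w
  have hw4 : ¬ InFourClique G w := fun h => hw (hSU h)
  have hcompl : 4 ≤ Uᶜ.ncard := hN.four_le_ncard_compl (fun h3 => hw4 (hN.inFourClique h3)) hw
    hU.prop.1 (huniv w hw N hN) hle
  exact hw4 (inFourClique_of_isClique (isClique_compl_of_forall_isRim hG.exists_isRim huniv) hw
    hcompl)

end FourCliques

section Blocks

variable {V : Type*} {G : SimpleGraph V} {B U W : Set V} {s : Finset V} {x y z : V}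

lemma not_isBridge_of_preconnected_sdiff (hcut : ∀ v ∈ B, (G.induce (B \ {v})).Preconnected)
    (hx : x ∈ B) (hy : y ∈ B) (hz : z ∈ B) (hxy : x ≠ y) (hzx : z ≠ x) (hzy : z ≠ y) :
    ¬ G.IsBridge s(x, y) := by
  have havoid : ∀ ⦃v a b⦄, v ∈ B → (v = x ∨ v = y) → a ∈ B \ {v} → b ∈ B \ {v} →
      (G.deleteEdges {s(x, y)}).Reachable a b := by
    intro v a b hvB hv ha hb
    refine (reachable_spanningInduce (hcut v hvB) ha hb).mono fun p q hpq => ?_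
    obtain ⟨hpq, hp, hq⟩ := spanningInduce_adj.mp hpq
    refine deleteEdges_adj.mpr ⟨hpq, fun h => ?_⟩
    have hv' : v ∈ s(p, q) := Set.mem_singleton_iff.mp h ▸ Sym2.mem_iff.mpr hv
    exact (Sym2.mem_iff.mp hv').elim (fun h => hp.2 h.symm) fun h => hq.2 h.symm
  rw [isBridge_iff, not_not]
  exact (havoid hy (.inr rfl) ⟨hx, hxy⟩ ⟨hz, hzy⟩).trans
    (havoid hx (.inl rfl) ⟨hz, hzx⟩ ⟨hy, hxy.symm⟩)

/-- A stage, not yet containing the block `B`, of the growth of a connected set `U` along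
`4`-cliques that meet `B`. Writing `μ` for the cyclomatic number, the first clique has excess
`4 μ(G[U]) - 3 |U| = 0`, and each further one raises the excess by at least `3`. -/
structure IsPartialCover (G : SimpleGraph V) (B U : Set V) : Prop where
  inter_nonempty : (B ∩ U).Nonempty
  not_subset : ¬ B ⊆ U
  preconnected : (G.induce U).Preconnected
  three_mul_ncard_le : 3 * U.ncard ≤ 4 * cyclomaticNumber (spanningInduce G U)
  three_mul_ncard_add_three_le :
    4 < U.ncard → 3 * U.ncard + 3 ≤ 4 * cyclomaticNumber (spanningInduce G U)

lemma preconnected_induce_union_of_isClique (hU : (G.induce U).Preconnected)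
    (hW : G.IsClique W) (hxU : x ∈ U) (hxW : x ∈ W) : (G.induce (U ∪ W)).Preconnected :=
  (induce_union_connected hU (preconnected_induce_of_isClique hW) ⟨x, hxU, hxW⟩).preconnected

variable [Finite V]

lemma isPartialCover_of_isNClique_four (hB : 4 < B.ncard) (hs : G.IsNClique 4 s) (hxB : x ∈ B)
    (hxs : x ∈ s) : IsPartialCover G B s := by
  have hcover := coverNullity_ncard_le_cyclomaticNumber (T := s) fun v hv =>
    ⟨s, hs, hv, subset_rfl⟩
  have hcard : (s : Set V).ncard = 4 := by rw [Set.ncard_coe_finset, hs.card_eq]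
  rw [hcard] at hcover
  refine ⟨⟨x, hxB, hxs⟩, fun h => ?_, preconnected_induce_of_isClique hs.isClique, ?_, ?_⟩
  · have := Set.ncard_le_ncard h
    lia
  · rw [hcard]
    unfold coverNullity at hcover
    lia
  · lia

lemma ncard_sdiff_le_three_of_isNClique_four (hs : G.IsNClique 4 s) (hxs : x ∈ s) (hxU : x ∈ U) :
    (↑s \ U : Set V).ncard ≤ 3 := by
  rw [← ncard_sdiff_singleton_of_isNClique_four hs hxs]
  exact Set.ncard_le_ncard
    (Set.sdiff_subset_sdiff_right (Set.singleton_subset_iff.mpr hxU))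

lemma IsPartialCover.union (hU : IsPartialCover G B U) (hs : G.IsNClique 4 s) (hxs : x ∈ s)
    (hxU : x ∈ U) (hsU : ¬ ↑s ⊆ U) (hBU : ¬ B ⊆ U ∪ s) : IsPartialCover G B (U ∪ s) := by
  have hgain := (cyclomaticNumber_add_min_le_of_isNClique_four hs hsU).trans
    (cyclomaticNumber_mono spanningInduce_sup_le_union)
  have h3 := ncard_sdiff_le_three_of_isNClique_four hs hxs hxU
  have hpos : 0 < (↑s \ U : Set V).ncard := (Set.ncard_pos).mpr (Set.sdiff_nonempty.mpr hsU)
  have hcard := Set.ncard_sdiff_add_ncard (s : Set V) U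
  have hle := hU.three_mul_ncard_le
  rw [Set.union_comm] at hcard
  refine ⟨hU.inter_nonempty.mono (Set.inter_subset_inter_right B Set.subset_union_left), hBU,
    preconnected_induce_union_of_isClique hU.preconnected hs.isClique hxU hxs, ?_,
    fun _ => ?_⟩ <;> lia

/-- Since `x` is not a cut vertex of `B`, some edge joins `U` to `W` away from their common
vertex `x`. -/
lemma cyclomaticNumber_sup_lt_of_inter_eq_singleton (hU : (G.induce U).Preconnected)
    (hW : (G.induce W).Preconnected) (hWU : W ∩ U = {x}) (hBU : B ⊆ U ∪ W) (hBW : ¬ B ⊆ W)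
    (hcut : (G.induce (B \ {x})).Preconnected) (hyB : y ∈ B) (hyW : y ∈ W) (hyU : y ∉ U) :
    cyclomaticNumber (spanningInduce G U ⊔ spanningInduce G W) <
      cyclomaticNumber (spanningInduce G (U ∪ W)) := by
  obtain ⟨hxW, hxU⟩ : x ∈ W ∩ U := hWU ▸ Set.mem_singleton x
  obtain ⟨z, hzB, hzW⟩ := Set.not_subset.mp hBW
  obtain ⟨p, hp, q, hq, hpW, hqW, hpq⟩ := exists_adj_of_preconnected_induce hcut
    ⟨hyB, fun h => hyU (h ▸ hxU)⟩ hyW ⟨hzB, fun h => hzW (h ▸ hxW)⟩ hzW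
  have hpU : p ∉ U := fun h => hp.2 (hWU ▸ ⟨hpW, h⟩)
  have hqU : q ∈ U := (hBU hq.1).resolve_right hqW
  refine cyclomaticNumber_lt_of_reachable spanningInduce_sup_le_union (x := p) (y := q)
    (spanningInduce_adj.mpr ⟨hpq, .inr hpW, .inl hqU⟩) ?_
    (((reachable_spanningInduce hW hpW hxW).mono le_sup_right).trans
      ((reachable_spanningInduce hU hxU hqU).mono le_sup_left))
  rintro (h | h)
  · exact hpU (spanningInduce_adj.mp h).2.1
  · exact hqW (spanningInduce_adj.mp h).2.2

lemma IsPartialCover.three_mul_ncard_union_add_seven_le (hU : IsPartialCover G B U)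
    (hcut : ∀ v ∈ B, (G.induce (B \ {v})).Preconnected) (h7 : 7 ≤ B.ncard)
    (hs : G.IsNClique 4 s) (hxB : x ∈ B) (hxs : x ∈ s) (hxU : x ∈ U) (hyB : y ∈ B) (hys : y ∈ s)
    (hyU : y ∉ U) (hBU : B ⊆ U ∪ s) :
    3 * (U ∪ s).ncard + 7 ≤ 4 * cyclomaticNumber (spanningInduce G (U ∪ s)) := by
  have hsub : ¬ ↑s ⊆ U := fun h => hyU (h hys)
  have hgain := cyclomaticNumber_add_min_le_of_isNClique_four hs hsub
  have hmono : cyclomaticNumber (spanningInduce G U ⊔ spanningInduce G s) ≤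
      cyclomaticNumber (spanningInduce G (U ∪ s)) :=
    cyclomaticNumber_mono spanningInduce_sup_le_union
  have hle3 := ncard_sdiff_le_three_of_isNClique_four hs hxs hxU
  have hpos : 0 < (↑s \ U : Set V).ncard := (Set.ncard_pos).mpr (Set.sdiff_nonempty.mpr hsub)
  have hexcess := hU.three_mul_ncard_le
  have hscard : (s : Set V).ncard = 4 := by rw [Set.ncard_coe_finset, hs.card_eq]
  have hBcard := Set.ncard_le_ncard hBU
  have hcard := Set.ncard_sdiff_add_ncard (s : Set V) U
  rw [Set.union_comm] at hcard
  obtain hlt | heq := hle3.lt_or_eq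
  · have hexcess3 := hU.three_mul_ncard_add_three_le (by lia)
    lia
  · have hsU : ↑s ∩ U = {x} := by
      have hsplit := Set.ncard_inter_add_ncard_sdiff_eq_ncard (s : Set V) U
      have hx : {x} ⊆ (↑s ∩ U : Set V) := Set.singleton_subset_iff.mpr ⟨hxs, hxU⟩
      refine (Set.eq_of_subset_of_ncard_le hx ?_).symm
      rw [Set.ncard_singleton]
      lia
    have hBs : ¬ B ⊆ s := fun h => by
      have := Set.ncard_le_ncard h
      lia
    have hlt := cyclomaticNumber_sup_lt_of_inter_eq_singleton hU.preconnected
      (preconnected_induce_of_isClique hs.isClique) hsU hBU hBs (hcut x hxB) hyB hys hyU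
    lia

lemma exists_three_mul_ncard_add_seven_le_four_mul_cyclomaticNumber (hB : (G.induce B).Preconnected)
    (hcut : ∀ v ∈ B, (G.induce (B \ {v})).Preconnected) (h7 : 7 ≤ B.ncard)
    (hclique : ∀ x ∈ B, ∀ y ∈ B, G.Adj x y →
      ∃ s : Finset V, G.IsNClique 4 s ∧ x ∈ s ∧ y ∈ s) :
    ∃ U : Set V, 3 * U.ncard + 7 ≤ 4 * cyclomaticNumber (spanningInduce G U) := by
  obtain ⟨a, ha, b, hb, hab⟩ := (Set.one_lt_ncard).mp (by lia : 1 < B.ncard)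
  obtain ⟨p, hp, q, hq, -, -, hpq⟩ :=
    exists_adj_of_preconnected_induce hB (W := {a}) ha rfl hb hab.symm
  obtain ⟨s₀, hs₀, hps₀, -⟩ := hclique p hp q hq hpq
  obtain ⟨U, -, hU⟩ := {U | IsPartialCover G B U}.toFinite.exists_le_maximal
    (isPartialCover_of_isNClique_four (by lia) hs₀ hp hps₀)
  obtain ⟨c, hcB, hcU⟩ := hU.prop.inter_nonempty
  obtain ⟨d, hdB, hdU⟩ := Set.not_subset.mp hU.prop.not_subset
  obtain ⟨x, hxB, y, hyB, hxU, hyU, hxy⟩ :=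
    exists_adj_of_preconnected_induce hB hcB hcU hdB hdU
  obtain ⟨s, hs, hxs, hys⟩ := hclique x hxB y hyB hxy
  by_cases hBU : B ⊆ U ∪ s
  · exact ⟨U ∪ s, hU.prop.three_mul_ncard_union_add_seven_le hcut h7 hs hxB hxs hxU hyB hys hyU
      hBU⟩
  · have hUs := hU.prop.union hs hxs hxU (Set.not_subset.mpr ⟨y, hys, hyU⟩) hBU
    exact absurd (hU.le_of_ge hUs Set.subset_union_left (Or.inr hys)) hyU

/-- A block of order at least `7` would force the excess `4 μ(G) - 3 |V|` above `6`. -/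
lemma ncard_le_six_of_ncard_edgeSet_add_one_le (hG : G.Connected) (hloc : LocallyNonforesty G)
    (hsize : G.edgeSet.ncard + 1 ≤ Nat.card V + coverNullity (Nat.card V))
    (hB : (G.induce B).Preconnected) (hcut : ∀ v ∈ B, (G.induce (B \ {v})).Preconnected) :
    B.ncard ≤ 6 := by
  by_contra! h7
  have hle : cyclomaticNumber G ≤ coverNullity (Nat.card V) := by
    have := card_add_cyclomaticNumber_le_ncard_edgeSet_add_one hG
    lia
  have hcover := four_mul_coverNullity_le (Nat.card V)
  have hfour : ∀ v, InFourClique G v := hloc.inFourClique (by lia)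
  have hclique : ∀ x ∈ B, ∀ y ∈ B, G.Adj x y →
      ∃ s : Finset V, G.IsNClique 4 s ∧ x ∈ s ∧ y ∈ s := by
    intro x hx y hy hxy
    obtain ⟨z, hz, hzxy⟩ := Set.exists_mem_notMem_of_ncard_lt_ncard (s := {x, y}) (t := B)
      (by rw [Set.ncard_pair hxy.ne]; lia)
    exact exists_isNClique_four_of_not_isBridge hfour hle hxy
      (not_isBridge_of_preconnected_sdiff hcut hx hy hz hxy.ne (fun h => hzxy (.inl h))
        fun h => hzxy (.inr h))
  obtain ⟨U, hU⟩ := exists_three_mul_ncard_add_seven_le_four_mul_cyclomaticNumber hB hcut h7 hclique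
  have := three_mul_card_add_le_four_mul_cyclomaticNumber hloc.exists_isRim hU
  lia

end Blocks

section Extremal

variable {V W : Type*} {G : SimpleGraph V} {H : SimpleGraph W} {v : V}

lemma InFourClique.map (hv : InFourClique G v) {f : G →g H} (hf : Function.Injective f) :
    InFourClique H (f v) := by
  obtain ⟨s, hs, hvs⟩ := hv
  exact ⟨s.map ⟨f, hf⟩, hs.map.mono ((map_le_iff_le_comap _ _ _).mpr fun _ _ => f.map_adj),
    Finset.mem_map_of_mem _ hvs⟩

lemma InFourClique.not_isAcyclic_induce_neighborSet (hv : InFourClique G v) :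
    ¬ (G.induce (G.neighborSet v)).IsAcyclic := by
  classical
  obtain ⟨s, hs, hvs⟩ := hv
  intro hacyc
  refine (cliqueFree_induce_iff (G := G) _ 3).mp (hacyc.cliqueFree le_rfl) ?_ (hs.erase_of_mem hvs)
  exact fun w hw => hs.isClique hvs (Finset.mem_of_mem_erase hw) (Finset.ne_of_mem_erase hw).symm

lemma locallyNonforesty_of_forall_inFourClique (hG : ∀ v, InFourClique G v) :
    LocallyNonforesty G :=
  fun v => (hG v).not_isAcyclic_induce_neighborSet

/-- A connected graph each of whose vertices lies in a `4`-clique and whose number of edges is as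
small as that allows; the graph `G` of the theorem is compared with such graphs. -/
structure IsEconomicalCover (G : SimpleGraph V) : Prop where
  connected : G.Connected
  inFourClique : ∀ v, InFourClique G v
  ncard_edgeSet_add_one_le : G.edgeSet.ncard + 1 ≤ Nat.card V + coverNullity (Nat.card V)

lemma IsEconomicalCover.of_iso (hG : IsEconomicalCover G) (f : G ≃g H) : IsEconomicalCover H where
  connected := f.connected_iff.mp hG.connected
  inFourClique w := by
    simpa using (hG.inFourClique (f.symm w)).map (f := f.toHom) f.injective
  ncard_edgeSet_add_one_le := by
    rw [← Nat.card_coe_set_eq, ← Nat.card_congr f.mapEdgeSet, ← Nat.card_congr f.toEquiv]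
    exact hG.ncard_edgeSet_add_one_le

lemma inFourClique_top_fin_four (i : Fin 4) : InFourClique (⊤ : SimpleGraph (Fin 4)) i :=
  ⟨Finset.univ, by simp [isNClique_iff, isClique_iff, Set.Pairwise], Finset.mem_univ i⟩

lemma ncard_edgeSet_sum [Finite V] [Finite W] :
    (G ⊕g H).edgeSet.ncard = G.edgeSet.ncard + H.edgeSet.ncard := by
  simp only [← Nat.card_coe_set_eq, Nat.card_congr edgeSetSumEquiv, Nat.card_sum]

lemma ncard_edgeSet_sup_edge_le [Finite V] {x y : V} :
    (G ⊔ edge x y).edgeSet.ncard ≤ G.edgeSet.ncard + 1 := by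
  rw [edgeSet_sup]
  grw [Set.ncard_union_le, Set.ncard_le_ncard edgeSet_edge_subset, Set.ncard_singleton]

lemma IsEconomicalCover.sum_top_sup_edge [Finite V] (hG : IsEconomicalCover G) (v : V) :
    IsEconomicalCover ((G ⊕g (⊤ : SimpleGraph (Fin 4))) ⊔ edge (Sum.inl v) (Sum.inr 0)) where
  connected := hG.connected.sum_sup_edge connected_top
  inFourClique
    | .inl w => (hG.inFourClique w).map
        (f := (Hom.ofLE le_sup_left).comp Embedding.sumInl.toHom) Sum.inl_injective
    | .inr i => (inFourClique_top_fin_four i).map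
        (f := (Hom.ofLE le_sup_left).comp Embedding.sumInr.toHom) Sum.inr_injective
  ncard_edgeSet_add_one_le := by
    have htop : (⊤ : SimpleGraph (Fin 4)).edgeSet.ncard = 6 := by
      rw [← coe_edgeFinset, Set.ncard_coe_finset, card_edgeFinset_top_eq_card_choose_two]
      rfl
    have hcard : Nat.card (V ⊕ Fin 4) = Nat.card V + 4 := by simp
    have hedges := hG.ncard_edgeSet_add_one_le
    rw [hcard, coverNullity_add_four]
    grw [ncard_edgeSet_sup_edge_le, ncard_edgeSet_sum, htop]
    lia

/-- The union of two `4`-cliques that share `8 - n` vertices, among them `0`, and cover `Fin n`;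
meant for `4 ≤ n ≤ 7`. -/
def twoFourCliques (n : ℕ) : SimpleGraph (Fin n) :=
  fromRel fun x y =>
    (x.1 < 4 ∧ y.1 < 4) ∨ ((x.1 + n < 8 ∨ 4 ≤ x.1) ∧ (y.1 + n < 8 ∨ 4 ≤ y.1))

instance (n : ℕ) : DecidableRel (twoFourCliques n).Adj :=
  inferInstanceAs (DecidableRel (fromRel _).Adj)

lemma inFourClique_twoFourCliques {n : ℕ} (h4 : 4 ≤ n) (h7 : n ≤ 7) (i : Fin n) :
    InFourClique (twoFourCliques n) i := by
  obtain hi | hi := lt_or_ge i.1 4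
  · refine ⟨Finset.univ.filter fun x => x.1 < 4, ?_, by simpa using hi⟩
    clear hi i
    interval_cases n <;> decide
  · refine ⟨Finset.univ.filter fun x => x.1 + n < 8 ∨ 4 ≤ x.1, ?_, by simpa using .inr hi⟩
    clear hi i
    interval_cases n <;> decide

lemma isEconomicalCover_twoFourCliques {n : ℕ} (h4 : 4 ≤ n) (h7 : n ≤ 7) :
    IsEconomicalCover (twoFourCliques n) where
  connected := by
    refine Connected.of_isUniversal (v := ⟨0, by lia⟩) fun i hi => ?_
    simp only [twoFourCliques, fromRel_adj]
    exact ⟨hi, .inl (by grind)⟩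
  inFourClique := inFourClique_twoFourCliques h4 h7
  ncard_edgeSet_add_one_le := by
    rw [← coe_edgeFinset, Set.ncard_coe_finset, Nat.card_fin]
    interval_cases n <;> decide

lemma exists_isEconomicalCover {n : ℕ} (h4 : 4 ≤ n) :
    ∃ H : SimpleGraph (Fin n), IsEconomicalCover H := by
  induction n using Nat.strong_induction_on with
  | h n ih =>
    obtain h7 | h8 := le_or_gt n 7
    · exact ⟨twoFourCliques n, isEconomicalCover_twoFourCliques h4 h7⟩
    obtain ⟨m, rfl⟩ := Nat.exists_eq_add_of_le' h4
    obtain ⟨H, hH⟩ := ih m (by lia) (by lia)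
    exact ⟨_, (hH.sum_top_sup_edge ⟨0, by lia⟩).of_iso (Iso.map finSumFinEquiv _)⟩

end Extremal

theorem stmt_16_general {V : Type*} [Fintype V] (G : SimpleGraph V) (n : ℕ)
    (hn : Fintype.card V = n) (hconn : G.Connected) (hloc : LocallyNonforesty G)
    (hmin : ∀ H : SimpleGraph (Fin n), H.Connected → LocallyNonforesty H →
      G.edgeSet.ncard ≤ H.edgeSet.ncard) (B : Set V) (hB : (G.induce B).Preconnected)
    (hcut : ∀ v ∈ B, (G.induce (B \ {v})).Preconnected) : B.ncard ≤ 6 := by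
  have := hconn.nonempty
  rw [← Nat.card_eq_fintype_card] at hn
  obtain ⟨H, hH⟩ := exists_isEconomicalCover (hn ▸ hloc.four_le_card)
  refine ncard_le_six_of_ncard_edgeSet_add_one_le hconn hloc ?_ hB hcut
  grw [hmin H hH.connected (locallyNonforesty_of_forall_inFourClique hH.inFourClique)]
  simpa only [hn, Nat.card_fin] using hH.ncard_edgeSet_add_one_le

theorem stmt_16 {V : Type*} [Fintype V] (G : SimpleGraph V) (n : ℕ)
    (hn : Fintype.card V = n) (h8 : 8 ≤ n)
    (hconn : G.Connected) (hloc : LocallyNonforesty G)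
    -- `G` has minimum size among connected locally nonforesty graphs of order `n`
    (hmin : ∀ H : SimpleGraph (Fin n), H.Connected → LocallyNonforesty H →
      G.edgeSet.ncard ≤ H.edgeSet.ncard) :
    ∀ B : Set V, IsBlock G B → B.ncard ≤ 6 :=
  fun B hB => stmt_16_general G n hn hconn hloc hmin B hB.1.preconnected hB.2.1
end

section
/- Let n ≥ 8 and let G be a connected locally nonforesty graph of order n whose size is minimum among all connected locally nonforesty graphs of order n. Then G has at most one block whose order is 5 or 6 (i.e., the number of blocks of order 5 plus the number of blocks of order 6 is at most 1). -/
/-!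
A locally nonforesty connected graph of order `n` with `b` blocks of order five or six has size at
least `(7 * n - 4 + 4 * b) / 4`. Joining disjoint complete graphs of order four by edges, with two
overlapping ones for the remainder of `n` modulo four, gives size at most `(7 * n + 3) / 4`. Hence
`4 * b ≤ 7` for a graph of minimum size.

The lower bound is an induction over cut vertices. Pieces `D` of a locally nonforesty graph need
not be locally nonforesty, so a vertex whose neighbors in `D` induce a forest receives a credit:
the potential of `D` is `4 * e(D) - 7 * #D + 4 + 3 * c`, with `c` such vertices. It is
superadditive when `D` is split at a cut vertex. It is nonnegative for connected `D`, since `D` can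
be grown without loss from one vertex or one wheel: a new vertex pays for itself by two edges or by
its credit, and otherwise it is the hub of a wheel that can be added as a whole. Finally, a set of
five or six vertices inducing minimum degree at least two has potential at least four.
-/

namespace LocallyNonforesty

open Finset SimpleGraph

section Degrees

variable {V : Type*} {G : SimpleGraph V} {u v w x : V} {D R S : Finset V}

open scoped Classical in
/-- The number of neighbors of `v` in `D`; the vertex `v` itself need not lie in `D`. -/
noncomputable def degreeIn (G : SimpleGraph V) (v : V) (D : Finset V) : ℕ :=
  #{a ∈ D | G.Adj v a}

/-- The degree sum of `G[D]`, that is, twice its size. -/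
noncomputable def degreeSum (G : SimpleGraph V) (D : Finset V) : ℕ :=
  ∑ v ∈ D, degreeIn G v D

lemma degreeIn_mono (h : S ⊆ D) : degreeIn G v S ≤ degreeIn G v D := by
  classical exact card_le_card (filter_subset_filter _ h)

lemma degreeIn_eq_card (h : ∀ r ∈ R, G.Adj v r) : degreeIn G v R = #R := by
  classical rw [degreeIn, filter_true_of_mem h]

lemma degreeIn_lt_card (hv : v ∈ R) : degreeIn G v R < #R := by
  classical exact card_lt_card (filter_ssubset.2 ⟨v, hv, G.irrefl⟩)

lemma degreeIn_pos (hu : u ∈ D) (hvu : G.Adj v u) : 0 < degreeIn G v D := by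
  classical exact card_pos.2 ⟨u, mem_filter.2 ⟨hu, hvu⟩⟩

lemma two_le_degreeIn (hu : u ∈ D) (hw : w ∈ D) (huw : u ≠ w) (hvu : G.Adj v u)
    (hvw : G.Adj v w) : 2 ≤ degreeIn G v D := by
  classical exact one_lt_card.2 ⟨u, mem_filter.2 ⟨hu, hvu⟩, w, mem_filter.2 ⟨hw, hvw⟩, huw⟩

lemma degreeIn_insert [DecidableEq V] [Decidable (G.Adj v x)] (hx : x ∉ D) :
    degreeIn G v (insert x D) = degreeIn G v D + if G.Adj v x then 1 else 0 := by
  classical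
  rw [degreeIn, filter_insert]
  split_ifs with h
  · exact card_insert_of_notMem fun hmem => hx (mem_filter.1 hmem).1
  · rfl

lemma degreeIn_insert_self [DecidableEq V] (hx : x ∉ D) :
    degreeIn G x (insert x D) = degreeIn G x D := by
  classical simp [degreeIn_insert hx]

lemma degreeIn_insert_le [DecidableEq V] (hx : x ∉ D) :
    degreeIn G v (insert x D) ≤ degreeIn G v D + 1 := by
  classical
  rw [degreeIn_insert hx]
  split_ifs <;> omega

lemma degreeSum_insert [DecidableEq V] (hx : x ∉ D) :
    degreeSum G (insert x D) = degreeSum G D + 2 * degreeIn G x D := by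
  classical
  have hnew : ∑ v ∈ D, (if G.Adj v x then 1 else 0) = degreeIn G x D := by
    simp only [degreeIn, card_filter, G.adj_comm]
  rw [degreeSum, sum_insert hx, degreeIn_insert_self hx]
  simp only [degreeSum, degreeIn_insert hx, sum_add_distrib, hnew]
  ring

lemma degreeSum_add_degreeSum_le [DecidableEq V] (h : #(R ∩ S) ≤ 1) :
    degreeSum G R + degreeSum G S ≤ degreeSum G (R ∪ S) := by
  classical
  simp only [degreeSum, degreeIn, ← card_sigma]
  rw [← card_union_of_disjoint]
  · refine card_le_card fun p => ?_
    simp only [mem_union, mem_sigma, mem_filter]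
    tauto
  · refine disjoint_left.2 fun p hR hS => ?_
    simp only [mem_sigma, mem_filter] at hR hS
    exact hR.2.2.ne (card_le_one.1 h _ (mem_inter.2 ⟨hR.1, hS.1⟩) _
      (mem_inter.2 ⟨hR.2.1, hS.2.1⟩))

lemma degreeSum_univ [Fintype V] : degreeSum G univ = 2 * G.edgeSet.ncard := by
  classical
  rw [← coe_edgeFinset, Set.ncard_coe_finset, ← G.sum_degrees_eq_twice_card_edges]
  refine sum_congr rfl fun v _ => ?_
  rw [degreeIn, ← card_neighborFinset_eq_degree, neighborFinset_eq_filter]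

end Degrees

section Rims

variable {V : Type*} {G : SimpleGraph V} {v : V} {D R : Finset V}

/-- `R` is the rim of a generalized wheel with hub `v`: a nonempty set of neighbors of `v` inducing
a subgraph of minimum degree at least two. A local subgraph contains a rim if and only if it
contains a cycle, and unlike cycles, rims can be restricted to unions of components. -/
structure IsRim (G : SimpleGraph V) (v : V) (R : Finset V) : Prop where
  nonempty : R.Nonempty
  adj : ∀ r ∈ R, G.Adj v r
  two_le_degreeIn : ∀ r ∈ R, 2 ≤ degreeIn G r R

/-- The vertices that are not the hub of a rim contained in `D`, that is, the vertices whose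
neighbors in `D` induce a forest. These are the vertices that receive credit in the piece `D`. -/
def rimless (G : SimpleGraph V) (D : Finset V) : Set V :=
  {v | ∀ R ⊆ D, ¬ IsRim G v R}

lemma notMem_rimless : v ∉ rimless G D ↔ ∃ R ⊆ D, IsRim G v R := by
  simp [rimless]

namespace IsRim

variable (hR : IsRim G v R)
include hR

lemma hub_notMem : v ∉ R := fun hv => G.irrefl (hR.adj v hv)

lemma three_le_card : 3 ≤ #R := by
  obtain ⟨r, hr⟩ := hR.nonempty
  exact (hR.two_le_degreeIn r hr).trans_lt (degreeIn_lt_card hr)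

lemma four_mul_card_le_degreeSum [DecidableEq V] : 4 * #R ≤ degreeSum G (insert v R) := by
  have hsum : #R • 2 ≤ degreeSum G R := card_nsmul_le_sum R _ 2 hR.two_le_degreeIn
  rw [degreeSum_insert hR.hub_notMem, degreeIn_eq_card hR.adj]
  simp only [smul_eq_mul] at hsum
  omega

end IsRim

lemma mem_rimless_of_degreeIn_le_two (h : degreeIn G v D ≤ 2) : v ∈ rimless G D := by
  intro R hRD hR
  have h3 := hR.three_le_card
  rw [← degreeIn_eq_card hR.adj] at h3
  have := degreeIn_mono (G := G) (v := v) hRD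
  omega

lemma exists_card_eq_four_of_degreeIn_le_three (hv : v ∈ D) (hdeg : degreeIn G v D ≤ 3)
    (hrim : v ∉ rimless G D) : ∃ Q ⊆ D, #Q = 4 ∧ 12 ≤ degreeSum G Q := by
  classical
  obtain ⟨R, hRD, hR⟩ := notMem_rimless.1 hrim
  have hcard : #R = 3 := by
    refine le_antisymm ?_ hR.three_le_card
    rw [← degreeIn_eq_card hR.adj]
    exact (degreeIn_mono hRD).trans hdeg
  refine ⟨insert v R, insert_subset hv hRD, ?_, ?_⟩
  · rw [card_insert_of_notMem hR.hub_notMem, hcard]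
  · have := hR.four_mul_card_le_degreeSum
    omega

lemma rimless_anti {S : Finset V} (h : S ⊆ D) : rimless G D ⊆ rimless G S :=
  fun _ hv R hRS => hv R (hRS.trans h)

lemma isRim_support {c : G.Walk v v} {u : V} [DecidableEq V] (hc : c.IsCycle)
    (hadj : ∀ w ∈ c.support, G.Adj u w) : IsRim G u c.support.toFinset where
  nonempty := ⟨v, by simp⟩
  adj := by simpa using hadj
  two_le_degreeIn r hr := by
    classical
    rw [← hc.ncard_neighborSet_toSubgraph_eq_two (List.mem_toFinset.1 hr), degreeIn,
      ← Set.ncard_coe_finset]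
    refine Set.ncard_le_ncard (fun w hw => ?_) (finite_toSet _)
    have hw' : c.toSubgraph.Adj r w := hw
    simpa using And.intro (c.mem_verts_toSubgraph.1 hw'.snd_mem) hw'.adj_sub

lemma rimless_univ_eq_empty [Fintype V] (hG : LocallyNonforesty G) : rimless G univ = ∅ := by
  classical
  refine Set.eq_empty_iff_forall_notMem.2 fun v => notMem_rimless.2 ?_
  have hcyc := hG v
  simp only [IsAcyclic, not_forall, not_not] at hcyc
  obtain ⟨_, c, hc⟩ := hcyc
  refine ⟨_, subset_univ _, isRim_support (hc.map (f := (Embedding.induce _).toHom)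
    Subtype.val_injective) ?_⟩
  rw [Walk.support_map]
  exact List.forall_mem_map.2 fun w _ => w.2

end Rims

section Cuts

variable {V : Type*} {G : SimpleGraph V} {s : Set V}

lemma preconnected_induce_iff_forall_exists_adj :
    (G.induce s).Preconnected ↔
      ∀ t ⊆ s, t.Nonempty → (s \ t).Nonempty → ∃ u ∈ t, ∃ w ∈ s \ t, G.Adj u w := by
  constructor
  · rintro hs t hts ⟨a, ha⟩ ⟨b, hb, hbt⟩
    obtain ⟨p⟩ := hs ⟨a, hts ha⟩ ⟨b, hb⟩
    obtain ⟨d, -, hfst, hsnd⟩ := p.exists_boundary_dart (Subtype.val ⁻¹' t) ha hbt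
    exact ⟨d.fst, hfst, d.snd, ⟨d.snd.2, hsnd⟩, d.adj⟩
  · intro hcut a b
    by_contra hab
    obtain ⟨_, ⟨u, hu, rfl⟩, w, ⟨hws, hw⟩, huw⟩ := hcut
      (Subtype.val '' {c | (G.induce s).Reachable a c}) (Subtype.coe_image_subset s _)
      ⟨a, a, Reachable.rfl, rfl⟩ ⟨b, b.2, by simpa using hab⟩
    have hadj : (G.induce s).Adj u ⟨w, hws⟩ := huw
    exact hw ⟨⟨w, hws⟩, hu.trans hadj.reachable, rfl⟩

lemma exists_mem_adj_of_preconnected_induce {v : V} (hs : (G.induce s).Preconnected) (hv : v ∈ s)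
    (hs' : s.Nontrivial) : ∃ u ∈ s, G.Adj v u := by
  have := hs'.coe_sort
  obtain ⟨u, hu⟩ := hs.exists_adj_of_nontrivial ⟨v, hv⟩
  exact ⟨u, u.2, hu⟩

end Cuts

section Excess

variable {V : Type*} {G : SimpleGraph V} {v x : V} {D Q R S : Finset V} {U U' : Set V}

open scoped Classical in
/-- The amount by which four times the size of `G[D]` exceeds `7 * #D - 4`, where every vertex
of `D` in `U` is credited `3`. For `U = rimless G D` it is the potential function of the proof; a
fixed `U` makes the potentials of different sets `D` comparable. -/
noncomputable def excess (G : SimpleGraph V) (U : Set V) (D : Finset V) : ℤ :=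
  2 * degreeSum G D + 4 - 7 * #D + 3 * #{v ∈ D | v ∈ U}

lemma excess_mono (h : ∀ v ∈ D, v ∈ U → v ∈ U') : excess G U D ≤ excess G U' D := by
  classical
  have : #{v ∈ D | v ∈ U} ≤ #{v ∈ D | v ∈ U'} := card_le_card fun v hv => by
    rw [mem_filter] at hv ⊢
    exact ⟨hv.1, h v hv.1 hv.2⟩
  unfold excess
  omega

lemma excess_le_excess_add_three (h : ∀ v ∈ D, v ∈ U → v = x ∨ v ∈ U') :
    excess G U D ≤ excess G U' D + 3 := by
  classical
  have : #{v ∈ D | v ∈ U} ≤ #{v ∈ D | v ∈ U'} + 1 := by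
    refine (card_le_card fun v hv => ?_).trans (card_insert_le x _)
    rw [mem_filter] at hv
    rw [mem_insert, mem_filter]
    exact (h v hv.1 hv.2).imp_right fun hvU' => ⟨hv.1, hvU'⟩
  unfold excess
  omega

lemma excess_singleton_of_mem (hx : x ∈ U) : excess G U {x} = 0 := by
  classical
  simp [excess, degreeSum, degreeIn, filter_singleton, hx]

lemma excess_insert [DecidableEq V] [Decidable (x ∈ U)] (hx : x ∉ D) :
    excess G U (insert x D) =
      excess G U D + 4 * degreeIn G x D - 7 + if x ∈ U then 3 else 0 := by
  classical
  rw [excess, excess, degreeSum_insert hx, card_insert_of_notMem hx, filter_insert]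
  split_ifs
  · rw [card_insert_of_notMem fun hmem => hx (mem_filter.1 hmem).1]
    push_cast
    ring
  · push_cast
    ring

lemma excess_le_excess_insert [DecidableEq V] (hx : x ∉ D) (hpos : 1 ≤ degreeIn G x D)
    (h : 2 ≤ degreeIn G x D ∨ x ∈ U) : excess G U D ≤ excess G U (insert x D) := by
  classical
  rw [excess_insert hx]
  grind

lemma excess_add_four_le_excess_insert [DecidableEq V] (hx : x ∉ D)
    (htwo : 2 ≤ degreeIn G x D) (h : 3 ≤ degreeIn G x D ∨ x ∈ U) :
    excess G U D + 4 ≤ excess G U (insert x D) := by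
  classical
  rw [excess_insert hx]
  grind

lemma IsRim.excess_insert_nonneg [DecidableEq V] (hR : IsRim G v R) :
    0 ≤ excess G U (insert v R) := by
  have hthree := hR.three_le_card
  have hsum := hR.four_mul_card_le_degreeSum
  rw [excess, card_insert_of_notMem hR.hub_notMem]
  omega

lemma excess_nonneg_of_card_eq_four (hcard : #Q = 4) (hsum : 12 ≤ degreeSum G Q) :
    0 ≤ excess G U Q := by
  rw [excess, hcard]
  omega

lemma excess_add_excess_add_three_le [DecidableEq V] [Decidable (x ∈ U)] (h : R ∩ S = {x}) :
    excess G U R + excess G U S + 3 ≤ excess G U (R ∪ S) + if x ∈ U then 3 else 0 := by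
  classical
  have hsum : degreeSum G R + degreeSum G S ≤ degreeSum G (R ∪ S) :=
    degreeSum_add_degreeSum_le (by rw [h, card_singleton])
  have hcard := card_union_add_card_inter R S
  have hcredit := sum_union_inter (s₁ := R) (s₂ := S) (f := fun v => if v ∈ U then 1 else 0)
  rw [h, card_singleton] at hcard
  rw [h, sum_singleton] at hcredit
  simp only [← card_filter] at hcredit
  unfold excess
  split_ifs at hcredit ⊢ <;> omega

lemma excess_add_excess_le [DecidableEq V] (h : R ∩ S = {x}) :
    excess G U R + excess G U S ≤ excess G U (R ∪ S) := by
  classical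
  have := excess_add_excess_add_three_le (G := G) (U := U) h
  split_ifs at this <;> omega

lemma IsRim.excess_le_excess_union [DecidableEq V] (hR : IsRim G v R) (hvS : v ∉ S) (hvU : v ∉ U)
    (hdeg : degreeIn G v S = 1) : excess G U S ≤ excess G U (S ∪ insert v R) := by
  classical
  have hrim : 0 ≤ excess G U (insert v R) := hR.excess_insert_nonneg
  rcases (S ∩ R).eq_empty_or_nonempty with hempty | hne
  · have hinter : insert v S ∩ insert v R = {v} := by
      rw [← insert_inter_distrib, hempty, insert_empty_eq]
    have hunion : insert v S ∪ insert v R = S ∪ insert v R := by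
      rw [insert_union, insert_eq_self]
      simp
    have hglue := excess_add_excess_add_three_le (G := G) (U := U) hinter
    rw [hunion, if_neg hvU, excess_insert hvS, if_neg hvU, hdeg] at hglue
    push_cast at hglue
    linarith
  · have hcard : #(S ∩ R) = 1 := by
      refine le_antisymm ?_ hne.card_pos
      rw [← degreeIn_eq_card fun r hr => hR.adj r (mem_inter.1 hr).2, ← hdeg]
      exact degreeIn_mono inter_subset_left
    obtain ⟨x, hx⟩ := card_eq_one.1 hcard
    have hglue := excess_add_excess_le (G := G) (U := U) (x := x) (R := S) (S := insert v R)
      (by rw [inter_insert_of_notMem hvS, hx])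
    linarith

end Excess

section Growth

variable {V : Type*} {G : SimpleGraph V} {D S : Finset V} {U : Set V}

lemma exists_ssuperset_excess_le (hD : (G.induce (D : Set V)).Preconnected)
    (hU : rimless G D ⊆ U) (hSD : S ⊂ D) (hS : S.Nonempty) :
    ∃ T ⊆ D, S ⊂ T ∧ excess G U S ≤ excess G U T := by
  classical
  obtain ⟨s, hs, v, ⟨hvD, hvS⟩, hadj⟩ := preconnected_induce_iff_forall_exists_adj.1 hD S
    (coe_subset.2 hSD.subset) hS (exists_of_ssubset hSD)
  rw [mem_coe] at hvD hvS
  have hpos : 1 ≤ degreeIn G v S := degreeIn_pos hs hadj.symm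
  by_cases hins : 2 ≤ degreeIn G v S ∨ v ∈ U
  · exact ⟨insert v S, insert_subset hvD hSD.subset, ssubset_insert hvS,
      excess_le_excess_insert hvS hpos hins⟩
  · rw [not_or, not_le] at hins
    obtain ⟨R, hRD, hR⟩ := notMem_rimless.1 fun hv => hins.2 (hU hv)
    refine ⟨S ∪ insert v R, union_subset hSD.subset (insert_subset hvD hRD), ?_,
      hR.excess_le_excess_union hvS hins.2 (by omega)⟩
    exact (ssubset_iff_of_subset subset_union_left).2 ⟨v, by simp, hvS⟩

theorem excess_le_excess_of_subset {S : Finset V} (hD : (G.induce (D : Set V)).Preconnected)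
    (hU : rimless G D ⊆ U) (hSD : S ⊆ D) (hS : S.Nonempty) :
    excess G U S ≤ excess G U D := by
  rcases hSD.eq_or_ssubset with rfl | hSD
  · exact le_rfl
  · obtain ⟨T, hTD, hST, hle⟩ := exists_ssuperset_excess_le hD hU hSD hS
    exact hle.trans (excess_le_excess_of_subset hD hU hTD (hS.mono hST.subset))
termination_by #D - #S
decreasing_by exact Nat.sub_lt_sub_left (card_lt_card hSD) (card_lt_card hST)

theorem excess_rimless_nonneg (hD : (G.induce (D : Set V)).Connected) :
    0 ≤ excess G (rimless G D) D := by
  classical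
  obtain ⟨v, hv⟩ := hD.nonempty
  by_cases hrim : v ∈ rimless G D
  · rw [← excess_singleton_of_mem (G := G) hrim]
    exact excess_le_excess_of_subset hD.preconnected subset_rfl (singleton_subset_iff.2 hv)
      (singleton_nonempty v)
  · obtain ⟨R, hRD, hR⟩ := notMem_rimless.1 hrim
    exact hR.excess_insert_nonneg.trans <| excess_le_excess_of_subset hD.preconnected subset_rfl
      (insert_subset hv hRD) (insert_nonempty v R)

end Growth

section SmallBlocks

variable {V : Type*} {G : SimpleGraph V} {D Q : Finset V}

lemma two_le_degreeIn_of_preconnected (hcard : 3 ≤ #D) (hD : (G.induce (D : Set V)).Preconnected)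
    (hcut : ∀ v ∈ D, (G.induce (D \ {v} : Set V)).Preconnected) {v : V} (hv : v ∈ D) :
    2 ≤ degreeIn G v D := by
  classical
  obtain ⟨u, hu, hvu⟩ := exists_mem_adj_of_preconnected_induce hD hv
    (one_lt_card_iff_nontrivial.1 (by omega))
  have herase : 1 < #(D.erase u) := by
    rw [card_erase_of_mem hu]
    omega
  rw [one_lt_card_iff_nontrivial, Finset.Nontrivial, coe_erase] at herase
  obtain ⟨w, ⟨hw, hwu⟩, hvw⟩ :=
    exists_mem_adj_of_preconnected_induce (hcut u hu) ⟨hv, hvu.ne⟩ herase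
  exact two_le_degreeIn hu hw (Ne.symm hwu) hvu hvw

lemma four_le_excess_of_card_eq_four (hQD : Q ⊆ D) (hQ : #Q = 4) (hsum : 12 ≤ degreeSum G Q)
    (hcard : #D = 5 ∨ #D = 6) (hdeg : ∀ v ∈ D, 2 ≤ degreeIn G v D) :
    4 ≤ excess G (rimless G D) D := by
  classical
  have hQ0 : 0 ≤ excess G (rimless G D) Q := excess_nonneg_of_card_eq_four hQ hsum
  obtain ⟨y, hyD, hyQ⟩ := exists_mem_notMem_of_card_lt_card (s := Q) (t := D) (by omega)
  set E := D.erase y with hE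
  have hyE : y ∉ E := notMem_erase y D
  have hDE : insert y E = D := insert_erase hyD
  have hrim {v : V} (hv : degreeIn G v D ≤ 2) : v ∈ rimless G D := mem_rimless_of_degreeIn_le_two hv
  have hE0 : 0 ≤ excess G (rimless G D) E := by
    have hQE : Q ⊆ E := subset_erase.2 ⟨hQD, hyQ⟩
    have hcardE : #E + 1 = #D := card_erase_add_one hyD
    rcases hcard with hcard | hcard
    · rwa [← eq_of_subset_of_card_le hQE (by omega)]
    · obtain ⟨x, hxQ, hxE⟩ := exists_eq_insert_iff.2 ⟨hQE, show #Q + 1 = #E by omega⟩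
      have hxD : x ∈ D := erase_subset y D (by rw [← hE, ← hxE]; exact mem_insert_self x Q)
      have hx : degreeIn G x D ≤ degreeIn G x Q + 1 := by
        rw [← hDE, ← degreeIn_insert_self hxQ, hxE]
        exact degreeIn_insert_le hyE
      have hx2 := hdeg x hxD
      rw [← hxE]
      refine hQ0.trans (excess_le_excess_insert hxQ (by omega) ?_)
      exact (le_or_gt 2 (degreeIn G x Q)).imp_right fun h => hrim (by omega)
  have hy : degreeIn G y E = degreeIn G y D := by rw [← hDE, degreeIn_insert_self hyE]
  have hstep : excess G (rimless G D) E + 4 ≤ excess G (rimless G D) (insert y E) :=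
    excess_add_four_le_excess_insert hyE (hy ▸ hdeg y hyD)
      ((le_or_gt 3 (degreeIn G y E)).imp_right fun h => hrim (by omega))
  rw [hDE] at hstep
  linarith

lemma four_le_excess_of_forall (hdeg : ∀ v ∈ D, 2 ≤ degreeIn G v D)
    (h : ∀ v ∈ D, degreeIn G v D ≤ 3 → v ∈ rimless G D) :
    4 ≤ excess G (rimless G D) D := by
  classical
  have hweight : ∀ v ∈ D, 7 ≤ 2 * degreeIn G v D + 3 * if v ∈ rimless G D then 1 else 0 := by
    grind
  have hsum := card_nsmul_le_sum D _ 7 hweight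
  rw [sum_add_distrib, ← mul_sum, ← mul_sum, ← card_filter, smul_eq_mul] at hsum
  unfold excess degreeSum
  omega

theorem four_le_excess_of_two_le_degreeIn (hcard : #D = 5 ∨ #D = 6)
    (hdeg : ∀ v ∈ D, 2 ≤ degreeIn G v D) : 4 ≤ excess G (rimless G D) D := by
  by_cases hQ : ∃ Q ⊆ D, #Q = 4 ∧ 12 ≤ degreeSum G Q
  · obtain ⟨Q, hQD, hQ, hsum⟩ := hQ
    exact four_le_excess_of_card_eq_four hQD hQ hsum hcard hdeg
  · refine four_le_excess_of_forall hdeg fun v hv hv3 => ?_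
    by_contra hrim
    exact hQ (exists_card_eq_four_of_degreeIn_le_three hv hv3 hrim)

end SmallBlocks

section Separations

variable {V : Type*} [DecidableEq V] {G : SimpleGraph V} {v x : V} {D D₁ D₂ R : Finset V}

/-- The vertex sets `D₁` and `D₂` meet exactly in `x`, and no edge of `G` joins `D₁ \ {x}` to
`D₂ \ {x}`; hence `x` separates the rest of `D₁` from the rest of `D₂` in `G[D₁ ∪ D₂]`. -/
structure IsSeparation (G : SimpleGraph V) (x : V) (D₁ D₂ : Finset V) : Prop where
  inter_eq : D₁ ∩ D₂ = {x}
  eq_or_eq : ∀ u ∈ D₁, ∀ w ∈ D₂, G.Adj u w → u = x ∨ w = x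

lemma exists_isSeparation (hx : x ∈ D) (hD : ¬ (G.induce (D \ {x} : Set V)).Preconnected) :
    ∃ D₁ D₂, D₁ ⊂ D ∧ D₂ ⊂ D ∧ D₁ ∪ D₂ = D ∧ IsSeparation G x D₁ D₂ := by
  classical
  simp only [preconnected_induce_iff_forall_exists_adj, not_forall, not_exists, not_and] at hD
  obtain ⟨t, htD, ⟨a, ha⟩, ⟨b, hb, hbt⟩, hadj⟩ := hD
  have hxt : x ∉ t := fun hmem => (htD hmem).2 rfl
  refine ⟨{v ∈ D | v ∈ t ∨ v = x}, {v ∈ D | v ∉ t}, filter_ssubset.2 ⟨b, hb.1, ?_⟩,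
    filter_ssubset.2 ⟨a, (htD ha).1, ?_⟩, ?_, ⟨?_, ?_⟩⟩
  · exact not_or.2 ⟨hbt, hb.2⟩
  · exact not_not.2 ha
  · ext v
    simp only [mem_union, mem_filter]
    tauto
  · ext v
    simp only [mem_inter, mem_filter, mem_singleton]
    refine ⟨fun ⟨⟨_, hv⟩, _, hvt⟩ => hv.resolve_left hvt, ?_⟩
    rintro rfl
    exact ⟨⟨hx, .inr rfl⟩, hx, hxt⟩
  · simp only [mem_filter]
    rintro u ⟨-, hu⟩ w ⟨hwD, hwt⟩ huw
    by_contra! hne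
    exact hadj u (hu.resolve_right hne.1) w ⟨⟨hwD, hne.2⟩, hwt⟩ huw

namespace IsSeparation

variable (h : IsSeparation G x D₁ D₂)
include h

lemma symm : IsSeparation G x D₂ D₁ where
  inter_eq := inter_comm D₁ D₂ ▸ h.inter_eq
  eq_or_eq u hu w hw huw := (h.eq_or_eq w hw u hu huw.symm).symm

lemma mem_left : x ∈ D₁ :=
  mem_of_mem_inter_left (h.inter_eq ▸ mem_singleton_self x)

lemma mem_left_of_adj {u w : V} (hu : u ∈ D₁) (hux : u ≠ x) (hw : w ∈ D₁ ∪ D₂)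
    (huw : G.Adj u w) : w ∈ D₁ := by
  rcases mem_union.1 hw with hw | hw
  · exact hw
  · rw [(h.eq_or_eq u hu w hw huw).resolve_left hux]
    exact h.mem_left

lemma preconnected_left (hD : (G.induce (↑(D₁ ∪ D₂) : Set V)).Preconnected) :
    (G.induce (D₁ : Set V)).Preconnected := by
  rw [preconnected_induce_iff_forall_exists_adj] at hD ⊢
  have hsub : (D₁ : Set V) ⊆ ↑(D₁ ∪ D₂) := coe_subset.2 subset_union_left
  rintro t htD ht ⟨b, hb, hbt⟩
  by_cases hxt : x ∈ t
  · obtain ⟨u, ⟨huD, hut⟩, w, ⟨hwD, hw⟩, huw⟩ := hD (D₁ \ t) (Set.sdiff_subset.trans hsub)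
      ⟨b, hb, hbt⟩ ⟨x, hsub h.mem_left, fun hx => hx.2 hxt⟩
    have hwD₁ := h.mem_left_of_adj huD (fun hux => hut (hux ▸ hxt)) hwD huw
    exact ⟨w, not_not.1 fun hwt => hw ⟨hwD₁, hwt⟩, u, ⟨huD, hut⟩, huw.symm⟩
  · obtain ⟨u, hut, w, ⟨hwD, hwt⟩, huw⟩ := hD t (htD.trans hsub) ht ⟨b, hsub hb, hbt⟩
    exact ⟨u, hut, w, ⟨h.mem_left_of_adj (htD hut) (fun hux => hxt (hux ▸ hut)) hwD huw, hwt⟩, huw⟩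

lemma connected_left (hD : (G.induce (↑(D₁ ∪ D₂) : Set V)).Connected) :
    (G.induce (D₁ : Set V)).Connected :=
  (connected_iff _).2 ⟨h.preconnected_left hD.preconnected, ⟨x, h.mem_left⟩⟩

lemma subset_or_subset {B : Set V} (hBD : B ⊆ ↑(D₁ ∪ D₂))
    (hB : (G.induce (B \ {x})).Preconnected) : B ⊆ D₁ ∨ B ⊆ D₂ := by
  by_contra! hB'
  simp only [Set.not_subset] at hB'
  obtain ⟨⟨p, hpB, hp⟩, q, hqB, hq⟩ := hB'
  have hpx : p ≠ x := fun hpx => hp (hpx ▸ h.mem_left)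
  have hqx : q ≠ x := fun hqx => hq (hqx ▸ h.symm.mem_left)
  have hqD₁ : q ∈ D₁ := (mem_union.1 (hBD hqB)).resolve_right hq
  obtain ⟨u, ⟨⟨-, hux⟩, hu⟩, w, ⟨⟨hwB, hwx⟩, hw⟩, huw⟩ :=
    preconnected_induce_iff_forall_exists_adj.1 hB (B \ {x} ∩ D₁) Set.inter_subset_left
      ⟨q, ⟨hqB, hqx⟩, hqD₁⟩ ⟨p, ⟨hpB, hpx⟩, fun hp' => hp hp'.2⟩
  exact hw ⟨⟨hwB, hwx⟩, h.mem_left_of_adj hu hux (hBD hwB) huw⟩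

lemma isRim_inter_left (hR : IsRim G v R) (hRD : R ⊆ D₁ ∪ D₂) (hxR : x ∉ R)
    (hne : (R ∩ D₁).Nonempty) : IsRim G v (R ∩ D₁) where
  nonempty := hne
  adj r hr := hR.adj r (mem_inter.1 hr).1
  two_le_degreeIn r hr := by
    classical
    rw [mem_inter] at hr
    refine (hR.two_le_degreeIn r hr.1).trans (card_le_card fun w hw => ?_)
    rw [mem_filter] at hw ⊢
    have hwD₁ := h.mem_left_of_adj hr.2 (ne_of_mem_of_not_mem hr.1 hxR) (hRD hw.1) hw.2
    exact ⟨mem_inter.2 ⟨hw.1, hwD₁⟩, hw.2⟩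

lemma mem_rimless_union_of_ne (hv : v ∈ D₁) (hvx : v ≠ x) (hrim : v ∈ rimless G D₁) :
    v ∈ rimless G (D₁ ∪ D₂) := fun R hRD hR =>
  hrim R (fun r hr => h.mem_left_of_adj hv hvx (hRD hr) (hR.adj r hr)) hR

lemma mem_rimless_union (h₁ : x ∈ rimless G D₁) (h₂ : x ∈ rimless G D₂) :
    x ∈ rimless G (D₁ ∪ D₂) := by
  intro R hRD hR
  obtain ⟨r, hr⟩ := hR.nonempty
  rcases mem_union.1 (hRD hr) with hrD | hrD
  · exact h₁ _ inter_subset_right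
      (h.isRim_inter_left hR hRD hR.hub_notMem ⟨r, mem_inter.2 ⟨hr, hrD⟩⟩)
  · rw [union_comm] at hRD
    exact h₂ _ inter_subset_right
      (h.symm.isRim_inter_left hR hRD hR.hub_notMem ⟨r, mem_inter.2 ⟨hr, hrD⟩⟩)

lemma excess_add_excess_le_of_notMem_rimless (hx : x ∉ rimless G D₁) :
    excess G (rimless G D₁) D₁ + excess G (rimless G D₂) D₂ ≤
      excess G (rimless G (D₁ ∪ D₂)) (D₁ ∪ D₂) := by
  classical
  have h₁ : excess G (rimless G D₁) D₁ ≤ excess G (rimless G (D₁ ∪ D₂)) D₁ :=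
    excess_mono fun v hv hrim =>
      h.mem_rimless_union_of_ne hv (fun hvx => hx (hvx ▸ hrim)) hrim
  have h₂ : excess G (rimless G D₂) D₂ ≤ excess G (rimless G (D₁ ∪ D₂)) D₂ + 3 :=
    excess_le_excess_add_three fun v hv hrim => or_iff_not_imp_left.2 fun hvx =>
      union_comm D₁ D₂ ▸ h.symm.mem_rimless_union_of_ne hv hvx hrim
  have hglue := excess_add_excess_add_three_le (G := G) (U := rimless G (D₁ ∪ D₂)) h.inter_eq
  rw [if_neg fun hmem => hx (rimless_anti subset_union_left hmem)] at hglue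
  linarith

theorem excess_rimless_add_excess_rimless_le :
    excess G (rimless G D₁) D₁ + excess G (rimless G D₂) D₂ ≤
      excess G (rimless G (D₁ ∪ D₂)) (D₁ ∪ D₂) := by
  by_cases h₁ : x ∈ rimless G D₁
  · by_cases h₂ : x ∈ rimless G D₂
    · have hx := h.mem_rimless_union h₁ h₂
      refine (add_le_add (excess_mono fun v hv hrim => ?_) (excess_mono fun v hv hrim => ?_)).trans
        (excess_add_excess_le h.inter_eq)
      · rcases eq_or_ne v x with rfl | hvx
        · exact hx
        · exact h.mem_rimless_union_of_ne hv hvx hrim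
      · rcases eq_or_ne v x with rfl | hvx
        · exact hx
        · exact union_comm D₁ D₂ ▸ h.symm.mem_rimless_union_of_ne hv hvx hrim
    · rw [add_comm, union_comm]
      exact h.symm.excess_add_excess_le_of_notMem_rimless h₂
  · exact h.excess_add_excess_le_of_notMem_rimless h₁

end IsSeparation

end Separations

section CountingBlocks

variable {V : Type*} {G : SimpleGraph V}

/-- The vertex sets of the blocks of `G` of order five or six that are contained in `D`. These are
blocks of `G` rather than of `G[D]`, so that splitting `D` at a cut vertex distributes them. -/
def smallBlocks (G : SimpleGraph V) (D : Set V) : Set (Set V) :=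
  {B | IsBlock G B ∧ (B.ncard = 5 ∨ B.ncard = 6) ∧ B ⊆ D}

lemma preconnected_induce_sdiff_singleton {B : Set V} (hB : IsBlock G B) (x : V) :
    (G.induce (B \ {x})).Preconnected := by
  by_cases hx : x ∈ B
  · exact hB.2.1 x hx
  · rw [Set.sdiff_singleton_eq_self hx]
    exact hB.1.preconnected

lemma finite_smallBlocks (D : Finset V) : (smallBlocks G D).Finite :=
  D.finite_toSet.finite_subsets.subset fun _ hB => hB.2.2

lemma IsSeparation.ncard_smallBlocks_union_le [DecidableEq V] {x : V} {D₁ D₂ : Finset V}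
    (h : IsSeparation G x D₁ D₂) :
    (smallBlocks G ↑(D₁ ∪ D₂)).ncard ≤ (smallBlocks G D₁).ncard + (smallBlocks G D₂).ncard := by
  refine (Set.ncard_le_ncard (fun B hB => ?_)
    ((finite_smallBlocks D₁).union (finite_smallBlocks D₂))).trans (Set.ncard_union_le _ _)
  obtain ⟨hblock, hcard, hBD⟩ := hB
  exact (h.subset_or_subset hBD (preconnected_induce_sdiff_singleton hblock x)).imp
    (fun hB₁ => ⟨hblock, hcard, hB₁⟩) (fun hB₂ => ⟨hblock, hcard, hB₂⟩)

lemma four_mul_ncard_smallBlocks_le_excess_of_forall {D : Finset V}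
    (hD : (G.induce (D : Set V)).Connected)
    (hcut : ∀ v ∈ D, (G.induce (D \ {v} : Set V)).Preconnected) :
    4 * ((smallBlocks G D).ncard : ℤ) ≤ excess G (rimless G D) D := by
  have hsub : smallBlocks G D ⊆ {(D : Set V)} := fun B hB => (hB.1.2.2 D hB.2.2 hD hcut).symm
  rcases Set.subset_singleton_iff_eq.1 hsub with hempty | hsingleton
  · rw [hempty, Set.ncard_empty]
    exact excess_rimless_nonneg hD
  · obtain ⟨-, hcard, -⟩ : (D : Set V) ∈ smallBlocks G D := hsingleton ▸ rfl
    rw [Set.ncard_coe_finset] at hcard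
    rw [hsingleton, Set.ncard_singleton]
    exact four_le_excess_of_two_le_degreeIn hcard fun v hv =>
      two_le_degreeIn_of_preconnected (by omega) hD.preconnected hcut hv

theorem four_mul_ncard_smallBlocks_le_excess (D : Finset V)
    (hD : (G.induce (D : Set V)).Connected) :
    4 * ((smallBlocks G D).ncard : ℤ) ≤ excess G (rimless G D) D := by
  classical
  induction D using Finset.strongInduction with
  | H D ih =>
    by_cases hcut : ∀ v ∈ D, (G.induce (D \ {v} : Set V)).Preconnected
    · exact four_mul_ncard_smallBlocks_le_excess_of_forall hD hcut
    · push Not at hcut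
      obtain ⟨x, hx, hcut⟩ := hcut
      obtain ⟨D₁, D₂, hlt₁, hlt₂, rfl, hsep⟩ := exists_isSeparation hx hcut
      have hsplit := hsep.ncard_smallBlocks_union_le
      have hglue := hsep.excess_rimless_add_excess_rimless_le
      have h₁ := ih D₁ hlt₁ (hsep.connected_left hD)
      have h₂ := ih D₂ hlt₂ (hsep.symm.connected_left (union_comm D₁ D₂ ▸ hD))
      omega

theorem four_mul_ncard_isBlock_add_le [Fintype V] (hG : LocallyNonforesty G)
    (hconn : G.Connected) :
    4 * {B | IsBlock G B ∧ (B.ncard = 5 ∨ B.ncard = 6)}.ncard + 7 * Fintype.card V ≤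
      4 * G.edgeSet.ncard + 4 := by
  classical
  have hblocks : smallBlocks G ↑(univ : Finset V) =
      {B | IsBlock G B ∧ (B.ncard = 5 ∨ B.ncard = 6)} := by
    simp [smallBlocks]
  have hbound := four_mul_ncard_smallBlocks_le_excess (G := G) univ
    (by rw [coe_univ]; exact (induceUnivIso G).connected_iff.2 hconn)
  rw [hblocks, rimless_univ_eq_empty hG, excess, degreeSum_univ, card_univ] at hbound
  simp only [Set.mem_empty_iff_false, filter_false, card_empty] at hbound
  omega

end CountingBlocks

section SparseExamples

variable {V W : Type*} {G : SimpleGraph V} {H : SimpleGraph W}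

lemma not_isAcyclic_induce_neighborSet_apply (hG : LocallyNonforesty G) {f : G →g H}
    (hf : Function.Injective f) (v : V) : ¬ (H.induce (H.neighborSet (f v))).IsAcyclic := by
  let g : G.induce (G.neighborSet v) →g H.induce (H.neighborSet (f v)) :=
    induceHom f fun _ hw => f.map_adj hw
  exact fun hH => hG v (hH.comap g (induceHom_injective _ _ hf.injOn))

lemma of_iso (hG : LocallyNonforesty G) (f : G ≃g H) : LocallyNonforesty H := by
  intro w
  rw [← f.apply_symm_apply w]
  exact hG.not_isAcyclic_induce_neighborSet_apply (f := f.toHom) f.injective _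

lemma locallyNonforesty_top [Fintype V] (hV : 4 ≤ Fintype.card V) :
    LocallyNonforesty (⊤ : SimpleGraph V) := by
  classical
  intro v hv
  have hcard : 2 < #((⊤ : SimpleGraph V).neighborFinset v) := by
    rw [card_neighborFinset_eq_degree, complete_graph_degree]
    omega
  obtain ⟨a, b, c, ha, hb, hc, hab, hac, hbc⟩ := two_lt_card_iff.1 hcard
  rw [mem_neighborFinset] at ha hb hc
  refine hv.cliqueFree le_rfl {⟨a, ha⟩, ⟨b, hb⟩, ⟨c, hc⟩} (is3Clique_triple_iff.2 ?_)
  exact ⟨hab, hac, hbc⟩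

/-- Two complete graphs on four vertices, on the first and the last four of `4 + j` vertices.
The definition is meant for `j < 4`, where they overlap. -/
def overlappingQuads (j : ℕ) : SimpleGraph (Fin (4 + j)) where
  Adj a b := a ≠ b ∧ (((a : ℕ) < 4 ∧ (b : ℕ) < 4) ∨ (j ≤ (a : ℕ) ∧ j ≤ (b : ℕ)))
  symm := ⟨by tauto⟩
  loopless := ⟨by tauto⟩

instance (j : ℕ) : DecidableRel (overlappingQuads j).Adj := fun _ _ =>
  inferInstanceAs (Decidable (_ ∧ _))

lemma connected_overlappingQuads {j : ℕ} (hj : j < 4) : (overlappingQuads j).Connected := by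
  refine (connected_iff_exists_forall_reachable _).2 ⟨⟨3, by omega⟩, fun b => ?_⟩
  rcases eq_or_ne ⟨3, by omega⟩ b with rfl | hb
  · rfl
  · exact Adj.reachable ⟨hb, by dsimp only; omega⟩

lemma locallyNonforesty_overlappingQuads {j : ℕ} (hj : j < 4) :
    LocallyNonforesty (overlappingQuads j) := by
  have hK : LocallyNonforesty (⊤ : SimpleGraph (Fin 4)) := locallyNonforesty_top (by simp)
  intro v
  by_cases hv : (v : ℕ) < 4
  · let f : (⊤ : SimpleGraph (Fin 4)) →g overlappingQuads j :=
      ⟨Fin.castAdd j, fun {a b} hab => ⟨by simpa using hab, by simp⟩⟩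
    exact hK.not_isAcyclic_induce_neighborSet_apply (f := f) (Fin.castAdd_injective 4 j) ⟨v, hv⟩
  · let f : (⊤ : SimpleGraph (Fin 4)) →g overlappingQuads j :=
      ⟨Fin.addNatEmb j, fun {a b} hab => ⟨by simpa using hab, by simp⟩⟩
    have hfv : f ⟨v - j, by omega⟩ = v := Fin.ext (Nat.sub_add_cancel (by omega))
    rw [← hfv]
    exact hK.not_isAcyclic_induce_neighborSet_apply (f := f) (Fin.addNatEmb j).injective _

lemma four_mul_ncard_edgeSet_overlappingQuads_le {j : ℕ} (hj : j < 4) :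
    4 * (overlappingQuads j).edgeSet.ncard ≤ 7 * (4 + j) + 3 := by
  rw [← coe_edgeFinset, Set.ncard_coe_finset]
  interval_cases j <;> decide

/-- `G` and a disjoint complete graph on four vertices, joined by an edge at `v`. -/
def addPendantQuad (G : SimpleGraph V) (v : V) : SimpleGraph (V ⊕ Fin 4) :=
  (G ⊕g ⊤) ⊔ edge (.inl v) (.inr 0)

lemma connected_addPendantQuad (hG : G.Connected) (v : V) : (addPendantQuad G v).Connected :=
  hG.sum_sup_edge connected_top

lemma locallyNonforesty_addPendantQuad (hG : LocallyNonforesty G) (v : V) :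
    LocallyNonforesty (addPendantQuad G v) := by
  have hK : LocallyNonforesty (⊤ : SimpleGraph (Fin 4)) := locallyNonforesty_top (by simp)
  have hle : G ⊕g (⊤ : SimpleGraph (Fin 4)) ≤ addPendantQuad G v := le_sup_left
  rintro (u | u)
  · exact hG.not_isAcyclic_induce_neighborSet_apply
      (f := (Hom.ofLE hle).comp Embedding.sumInl.toHom) Sum.inl_injective u
  · exact hK.not_isAcyclic_induce_neighborSet_apply
      (f := (Hom.ofLE hle).comp Embedding.sumInr.toHom) Sum.inr_injective u

lemma ncard_edgeSet_addPendantQuad_le [Finite V] (v : V) :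
    (addPendantQuad G v).edgeSet.ncard ≤ G.edgeSet.ncard + 7 := by
  have hquad : (⊤ : SimpleGraph (Fin 4)).edgeSet.ncard = 6 := by
    rw [← coe_edgeFinset, Set.ncard_coe_finset]
    decide
  have hsum : (G ⊕g (⊤ : SimpleGraph (Fin 4))).edgeSet.ncard = G.edgeSet.ncard + 6 := by
    rw [← hquad, ← Nat.card_coe_set_eq, Nat.card_congr edgeSetSumEquiv, Nat.card_sum]
    rfl
  have hedge : (edge (.inl v) (.inr 0) : SimpleGraph (V ⊕ Fin 4)).edgeSet.ncard ≤ 1 :=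
    (Set.ncard_le_ncard (edgeSet_edge_subset ..)).trans (Set.ncard_singleton _).le
  rw [addPendantQuad, edgeSet_sup]
  exact (Set.ncard_union_le _ _).trans (by omega)

theorem exists_connected_locallyNonforesty_fin {n : ℕ} (hn : 4 ≤ n) :
    ∃ H : SimpleGraph (Fin n), H.Connected ∧ LocallyNonforesty H ∧
      4 * H.edgeSet.ncard ≤ 7 * n + 3 := by
  induction n using Nat.strong_induction_on with
  | h n ih =>
    by_cases h8 : n < 8
    · obtain ⟨j, rfl⟩ := Nat.exists_eq_add_of_le hn
      have hj : j < 4 := by omega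
      exact ⟨overlappingQuads j, connected_overlappingQuads hj,
        locallyNonforesty_overlappingQuads hj, four_mul_ncard_edgeSet_overlappingQuads_le hj⟩
    · obtain ⟨m, rfl⟩ := Nat.exists_eq_add_of_le' hn
      obtain ⟨H, hconn, hloc, hcard⟩ := ih m (by omega) (by omega)
      let v : Fin m := ⟨0, by omega⟩
      let f := Iso.map finSumFinEquiv (addPendantQuad H v)
      refine ⟨_, f.connected_iff.1 (connected_addPendantQuad hconn v),
        (locallyNonforesty_addPendantQuad hloc v).of_iso f, ?_⟩
      have hle := ncard_edgeSet_addPendantQuad_le (G := H) v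
      have hiso := Nat.card_congr f.mapEdgeSet
      rw [Nat.card_coe_set_eq, Nat.card_coe_set_eq] at hiso
      omega

end SparseExamples

end LocallyNonforesty

theorem stmt_17 {V : Type*} [Fintype V] (G : SimpleGraph V) (n : ℕ)
    (hn : Fintype.card V = n) (h8 : 8 ≤ n)
    (hconn : G.Connected) (hloc : LocallyNonforesty G)
    -- `G` has minimum size among connected locally nonforesty graphs of order `n`
    (hmin : ∀ H : SimpleGraph (Fin n), H.Connected → LocallyNonforesty H →
      G.edgeSet.ncard ≤ H.edgeSet.ncard) :
    -- there is at most one block whose order is 5 or 6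
    {B : Set V | IsBlock G B ∧ (B.ncard = 5 ∨ B.ncard = 6)}.Subsingleton := by
  obtain ⟨H, hHconn, hHloc, hH⟩ := LocallyNonforesty.exists_connected_locallyNonforesty_fin
    (show 4 ≤ n by omega)
  have hblocks := hloc.four_mul_ncard_isBlock_add_le hconn
  have hsize := hmin H hHconn hHloc
  rw [← Set.ncard_le_one_iff_subsingleton]
  omega
end
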